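/- Let Δ be a 3-dimensional normal pseudomanifold with g₂(Δ) = g₂(lk(t,Δ)) for some vertex t (Δ is g₂-minimal with respect to t). If Ω is an induced subcomplex of Δ that is a circle (a cycle whose vertices span no additional edges of Δ), then Ω ⊆ st(t, Δ); in particular every vertex of Ω is t or a neighbour of t. -/

import Mathlib

open Finset

/-- An abstract simplicial complex on vertex type `V`, given by its finite set of
(nonempty) faces, closed under taking nonempty subsets. -/
structure SComplex (V : Type) [DecidableEq V] where
  faces : Finset (Finset V)
  nonempty_of_mem : ∀ σ ∈ faces, σ.Nonempty
  down_closed : ∀ σ ∈ faces, ∀ τ ⊆ σ, τ.Nonempty → τ ∈ faces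

namespace SComplex

variable {V : Type} [DecidableEq V]

/-- the number `f_k` of `k`-dimensional faces -/
def fNum (K : SComplex V) (k : ℕ) : ℕ := (K.faces.filter fun σ => σ.card = k + 1).card

/-- `g₂` of a `d`-dimensional complex: `f₁ - (d+1) f₀ + C(d+2,2)` -/
def g2 (K : SComplex V) (d : ℕ) : ℤ :=
  (K.fNum 1 : ℤ) - (d + 1) * (K.fNum 0 : ℤ) + (Nat.choose (d + 2) 2 : ℤ)

/-- the vertex set of a complex -/
def vertices (K : SComplex V) : Finset V := K.faces.sup id

/-- the link of a face `σ` -/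
def link (K : SComplex V) (σ : Finset V) : SComplex V where
  faces := K.faces.filter fun τ => σ ∩ τ = ∅ ∧ σ ∪ τ ∈ K.faces
  nonempty_of_mem τ hτ := K.nonempty_of_mem τ (mem_filter.mp hτ).1
  down_closed := by
    intro τ hτ ρ hρ hne
    rw [mem_filter] at hτ ⊢
    obtain ⟨h1, h2, h3⟩ := hτ
    refine ⟨K.down_closed τ h1 ρ hρ hne, subset_empty.mp ?_, 
      K.down_closed _ h3 _ (union_subset_union Subset.rfl hρ) ?_⟩
    · exact h2 ▸ inter_subset_inter Subset.rfl hρ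
    · obtain ⟨w, hw⟩ := hne
      exact ⟨w, mem_union_right _ hw⟩

/-- the (closed) star of a vertex `t` -/
def star (K : SComplex V) (t : V) : SComplex V where
  faces := K.faces.filter fun τ => insert t τ ∈ K.faces
  nonempty_of_mem τ hτ := K.nonempty_of_mem τ (mem_filter.mp hτ).1
  down_closed := by
    intro τ hτ ρ hρ hne
    rw [mem_filter] at hτ ⊢
    exact ⟨K.down_closed τ hτ.1 ρ hρ hne,
      K.down_closed _ hτ.2 _ (insert_subset_insert _ hρ) (insert_nonempty _ _)⟩

/-- connectivity of a complex (through edges) -/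
def Connected (K : SComplex V) : Prop :=
  ∀ u ∈ K.vertices, ∀ w ∈ K.vertices,
    Relation.ReflTransGen (fun a b => ({a, b} : Finset V) ∈ K.faces) u w

/-- purity: every face is contained in a `d`-dimensional face -/
def Pure (K : SComplex V) (d : ℕ) : Prop :=
  ∀ σ ∈ K.faces, ∃ τ ∈ K.faces, σ ⊆ τ ∧ τ.card = d + 1

/-- strong connectivity through facets sharing `(d-1)`-faces -/
def StronglyConnected (K : SComplex V) (d : ℕ) : Prop :=
  ∀ σ ∈ K.faces, ∀ τ ∈ K.faces, σ.card = d + 1 → τ.card = d + 1 →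
    Relation.ReflTransGen
      (fun a b => a ∈ K.faces ∧ b ∈ K.faces ∧ a.card = d + 1 ∧ b.card = d + 1 ∧ (a ∩ b).card = d)
      σ τ

/-- `K` is a `d`-dimensional pseudomanifold -/
def IsPseudomanifold (K : SComplex V) (d : ℕ) : Prop :=
  K.Pure d ∧
  (∀ σ ∈ K.faces, σ.card = d →
    (K.faces.filter fun τ => σ ⊆ τ ∧ τ.card = d + 1).card = 2) ∧
  K.StronglyConnected d

/-- `K` is a `d`-dimensional normal pseudomanifold: a pseudomanifold all of whose
faces of codimension at least two have connected links -/
def IsNormal (K : SComplex V) (d : ℕ) : Prop :=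
  K.IsPseudomanifold d ∧ ∀ σ ∈ K.faces, σ.card + 1 ≤ d → (K.link σ).Connected

/-- the geometric realization of `K`, inside `V → ℝ` -/
def realization (K : SComplex V) [Fintype V] : Set (V → ℝ) :=
  {f | ∃ σ ∈ K.faces, (∀ v, v ∉ σ → f v = 0) ∧ (∀ v, 0 ≤ f v) ∧ (∑ v, f v) = 1}

end SComplex

/-- the standard 2-sphere -/
noncomputable def Sphere2 : Set (EuclideanSpace ℝ (Fin 3)) := Metric.sphere 0 1

/-- the real projective plane, as the quotient of the 2-sphere by the antipodal map -/
def RealProjPlane : Type :=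
  Quot fun a b : Sphere2 => (a : EuclideanSpace ℝ (Fin 3)) = -(b : EuclideanSpace ℝ (Fin 3))

noncomputable instance : TopologicalSpace RealProjPlane := by unfold RealProjPlane; infer_instance

noncomputable def UnitSquare : Set (ℝ × ℝ) := Set.Icc 0 1 ×ˢ Set.Icc 0 1

/-- the Möbius band, as a quotient of the unit square -/
def MobiusBand : Type :=
  Quot fun a b : UnitSquare =>
    (a : ℝ × ℝ).1 = 0 ∧ (b : ℝ × ℝ).1 = 1 ∧ (b : ℝ × ℝ).2 = 1 - (a : ℝ × ℝ).2

noncomputable instance : TopologicalSpace MobiusBand := by unfold MobiusBand; infer_instance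

noncomputable def ClosedDisc : Set (ℝ × ℝ) := Metric.closedBall 0 1

namespace SComplex

variable {V : Type} [DecidableEq V] [Fintype V]

/-- the carrier of `K` is a 2-sphere -/
def IsSphere2 (K : SComplex V) : Prop := Nonempty (K.realization ≃ₜ Sphere2)

/-- the carrier of `K` is a real projective plane -/
def IsRP2 (K : SComplex V) : Prop := Nonempty (K.realization ≃ₜ RealProjPlane)

/-- `K` is a triangulated Möbius strip -/
def IsMobius (K : SComplex V) : Prop := Nonempty (K.realization ≃ₜ MobiusBand)

/-- `K` is a triangulated disc -/
def IsDisc (K : SComplex V) : Prop := Nonempty (K.realization ≃ₜ ClosedDisc)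

end SComplex

namespace SComplex

variable {V : Type} [DecidableEq V]

/-- `K` is the boundary complex of a `(d+1)`-simplex: all proper nonempty subsets
of a set of `d+2` vertices. -/
def IsBoundarySimplex (K : SComplex V) (d : ℕ) : Prop :=
  ∃ W : Finset V, W.card = d + 2 ∧ K.faces = (W.powerset.erase W).erase ∅

/-- `Δ'` is obtained from the `d`-dimensional complex `Δ` by a single facet
subdivision: remove a facet `σ`, add a new vertex `w`, and add all faces
`w ⋆ τ` for proper faces `τ` of `σ`. -/
def FacetSubdivision (Δ Δ' : SComplex V) (d : ℕ) : Prop :=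
  ∃ σ ∈ Δ.faces, ∃ w : V, σ.card = d + 1 ∧ (∀ τ ∈ Δ.faces, w ∉ τ) ∧
    Δ'.faces = (Δ.faces.erase σ) ∪ (σ.powerset.erase σ).image (insert w)

/-- a stacked `d`-sphere: obtained from the boundary complex of a `(d+1)`-simplex
by a finite sequence of facet subdivisions. -/
def IsStackedSphere (K : SComplex V) (d : ℕ) : Prop :=
  ∃ K₀ : SComplex V, K₀.IsBoundarySimplex d ∧
    Relation.ReflTransGen (fun A B => FacetSubdivision A B d) K₀ K

end SComplex

namespace SComplex

variable {V : Type} [DecidableEq V]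

/-- `Ω` is a circle (cycle) complex: 1-dimensional, connected, with at least 3
vertices, every vertex lying on exactly two edges -/
def IsCircle (Ω : SComplex V) : Prop :=
  (∀ σ ∈ Ω.faces, σ.card ≤ 2) ∧ Ω.Connected ∧ 3 ≤ Ω.vertices.card ∧
    ∀ v ∈ Ω.vertices, (Ω.faces.filter fun e => e.card = 2 ∧ v ∈ e).card = 2

end SComplex


/-!
The rigidity theory behind the theorem is Kalai's hyperconnectivity: a motion of a configuration
`p : V → ι → K` is a map `x` with `p j ⬝ᵥ x i = p i ⬝ᵥ x j` on every edge `ij`, and the trivial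
motions are `x = A p` with `A` symmetric. Minimal mod 2 cycles can be contracted edge by edge, the
failure of a contraction splitting the cycle into smaller ones (Fogelsanger); with vertex splitting,
this shows that a cone over a minimal `k`-cycle is generically rigid for `card ι = k + 2`. In a
normal pseudomanifold of dimension `k + 1` vertex links are minimal `k`-cycles, so all vertex stars
are generically rigid.

The equality `g₂(Δ) = g₂(lk t)` says that there are exactly `card ι` edges outside the star of `t`
for each vertex outside it. After deleting one such edge `uv`, there is therefore a nonzero motion
that vanishes on the star; it cannot respect `uv`, since a motion of `Δ` vanishing on one star
vanishes everywhere. If `uv` lay on an induced circle, its other vertices would have stars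
without the edge `uv`, and consecutive ones share a facet. The motion would thus be given by a
single symmetric matrix on all these stars, which contain `u` and `v`, and would respect `uv`.
-/


open scoped Matrix

namespace Hyperconnectivity

/-! ### Motions and rigidity -/

section Rigidity

variable {V K ι : Type*} [Field K] [Fintype ι]

/-- The infinitesimal motions of a configuration `p` in Kalai's hyperconnectivity model, the
algebraic counterpart of infinitesimal isometries of bar frameworks. The graph of bars is given by
a family `F` of cliques: all pairs of vertices of a member of `F` are bars. -/
def IsMotion (F : Finset (Finset V)) (p x : V → ι → K) : Prop :=
  ∀ σ ∈ F, ∀ i ∈ σ, ∀ j ∈ σ, p j ⬝ᵥ x i = p i ⬝ᵥ x j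

/-- Infinitesimal rigidity: on `S`, every motion of the graph with cliques `F` is trivial. The
trivial motions are those induced by symmetric matrices, which are motions of every graph. -/
def IsRigidOn (F : Finset (Finset V)) (S : Finset V) (p : V → ι → K) : Prop :=
  ∀ x, IsMotion F p x → ∃ A : Matrix ι ι K, A.IsSymm ∧ Set.EqOn x (fun i => A *ᵥ p i) S

theorem IsMotion.mono {F G : Finset (Finset V)} {p x : V → ι → K} (hx : IsMotion G p x)
    (hFG : ∀ σ ∈ F, ∃ τ ∈ G, σ ⊆ τ) : IsMotion F p x := by
  intro σ hσ i hi j hj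
  obtain ⟨τ, hτ, hστ⟩ := hFG σ hσ
  exact hx τ hτ i (hστ hi) j (hστ hj)

theorem IsRigidOn.mono {F G : Finset (Finset V)} {S T : Finset V} {p : V → ι → K}
    (h : IsRigidOn F T p) (hFG : ∀ σ ∈ F, ∃ τ ∈ G, σ ⊆ τ) (hST : S ⊆ T) : IsRigidOn G S p := by
  intro x hx
  obtain ⟨A, hA, hxA⟩ := h x (hx.mono hFG)
  exact ⟨A, hA, hxA.mono (coe_subset.mpr hST)⟩

theorem dotProduct_mulVec_comm_of_isSymm {A : Matrix ι ι K} (hA : A.IsSymm) (a b : ι → K) :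
    a ⬝ᵥ A *ᵥ b = b ⬝ᵥ A *ᵥ a := by
  rw [Matrix.dotProduct_mulVec, ← Matrix.mulVec_transpose, hA.eq, dotProduct_comm]

theorem eq_of_dotProduct_eq_of_span_eq_top {p : V → ι → K} {T : Set V}
    (hT : Submodule.span K (p '' T) = ⊤) {y z : ι → K} (h : ∀ i ∈ T, p i ⬝ᵥ y = p i ⬝ᵥ z) :
    y = z := by
  classical
  refine dotProduct_eq y z fun w => ?_
  have hlin : dotProductBilin K K y = dotProductBilin K K z :=
    LinearMap.ext_on hT <| Set.forall_mem_image.mpr fun i hi => by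
      simpa [dotProduct_comm] using h i hi
  simpa using LinearMap.congr_fun hlin w

theorem matrix_eq_of_eqOn {p : V → ι → K} {T : Set V} (hT : Submodule.span K (p '' T) = ⊤)
    {A B : Matrix ι ι K} (h : Set.EqOn (fun i => A *ᵥ p i) (fun i => B *ᵥ p i) T) : A = B := by
  classical
  refine Matrix.toLin'.injective (LinearMap.ext_on hT <| Set.forall_mem_image.mpr fun i hi => ?_)
  simpa using h hi

theorem exists_isSymm_of_dotProduct_comm {p x : V → ι → K} {S : Set V}
    (hS : Submodule.span K (p '' S) = ⊤) (hx : ∀ i ∈ S, ∀ j ∈ S, p j ⬝ᵥ x i = p i ⬝ᵥ x j) :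
    ∃ A : Matrix ι ι K, A.IsSymm ∧ Set.EqOn x (fun i => A *ᵥ p i) S := by
  classical
  obtain ⟨B, hBS, -, hspan, hB⟩ :=
    exists_linearIndepOn_extension (linearIndepOn_empty K p) S.empty_subset
  have hBtop : Submodule.span K (p '' B) = ⊤ :=
    top_unique (hS ▸ Submodule.span_le.mpr hspan)
  let b : Module.Basis B K (ι → K) :=
    .mk hB (by rw [← Set.image_eq_range, hBtop])
  let A : Matrix ι ι K := LinearMap.toMatrix' (b.constr K fun i => x i)
  have hAB : ∀ i ∈ B, A *ᵥ p i = x i := fun i hi => by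
    have hbi : p i = b ⟨i, hi⟩ := (Module.Basis.mk_apply hB _ ⟨i, hi⟩).symm
    rw [LinearMap.toMatrix'_mulVec, hbi, Module.Basis.constr_basis]
  have hAsymm : A.IsSymm := by
    refine matrix_eq_of_eqOn hBtop fun i hi => eq_of_dotProduct_eq_of_span_eq_top hBtop
      fun j hj => ?_
    calc p j ⬝ᵥ Aᵀ *ᵥ p i = p i ⬝ᵥ A *ᵥ p j := by
          rw [Matrix.dotProduct_mulVec, Matrix.vecMul_transpose, dotProduct_comm]
      _ = p j ⬝ᵥ A *ᵥ p i := by rw [hAB i hi, hAB j hj, hx i (hBS hi) j (hBS hj)]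
  refine ⟨A, hAsymm, fun i hi => eq_of_dotProduct_eq_of_span_eq_top hBtop fun j hj => ?_⟩
  calc p j ⬝ᵥ x i = p i ⬝ᵥ A *ᵥ p j := by rw [hx i hi j (hBS hj), hAB j hj]
    _ = p j ⬝ᵥ A *ᵥ p i := dotProduct_mulVec_comm_of_isSymm hAsymm _ _

theorem isRigidOn_of_clique {F : Finset (Finset V)} {S : Finset V} {p : V → ι → K}
    (hS : Submodule.span K (p '' S) = ⊤) (hF : ∀ i ∈ S, ∀ j ∈ S, i ≠ j → ∃ σ ∈ F, i ∈ σ ∧ j ∈ σ) :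
    IsRigidOn F S p := by
  intro x hx
  refine exists_isSymm_of_dotProduct_comm hS fun i hi j hj => ?_
  rcases eq_or_ne i j with rfl | hij
  · rfl
  · obtain ⟨σ, hσ, hiσ, hjσ⟩ := hF i hi j hj hij
    exact hx σ hσ i hiσ j hjσ

end Rigidity

/-! ### Generic configurations -/

section Generic

variable {V K ι : Type*} [Field K]

/-- The filter of generic configurations: a property is generic when it holds off the zero locus of
some nonzero polynomial in the coordinates. -/
def genericFilter (V K ι : Type*) [Field K] : Filter (V → ι → K) where
  sets := {U | ∃ f : MvPolynomial (V × ι) K, f ≠ 0 ∧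
    ∀ p : V → ι → K, MvPolynomial.eval (Function.uncurry p) f ≠ 0 → p ∈ U}
  univ_sets := ⟨1, one_ne_zero, fun _ _ => trivial⟩
  sets_of_superset := fun ⟨f, hf, h⟩ hUW => ⟨f, hf, fun p hp => hUW (h p hp)⟩
  inter_sets := by
    rintro U W ⟨f, hf, hU⟩ ⟨g, hg, hW⟩
    refine ⟨f * g, mul_ne_zero hf hg, fun p hp => ?_⟩
    rw [map_mul] at hp
    exact ⟨hU p (left_ne_zero_of_mul hp), hW p (right_ne_zero_of_mul hp)⟩

theorem eventually_generic_of_eval {P : (V → ι → K) → Prop} (f : MvPolynomial (V × ι) K)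
    {p₀ : V → ι → K} (hp₀ : MvPolynomial.eval (Function.uncurry p₀) f ≠ 0)
    (h : ∀ p : V → ι → K, MvPolynomial.eval (Function.uncurry p) f ≠ 0 → P p) :
    ∀ᶠ p in genericFilter V K ι, P p :=
  ⟨f, fun hf => hp₀ (by rw [hf, map_zero]), h⟩

instance genericFilter_neBot [Infinite K] : (genericFilter V K ι).NeBot := by
  refine Filter.neBot_iff.mpr fun hbot => ?_
  obtain ⟨f, hf, h⟩ : ∅ ∈ genericFilter V K ι := by rw [hbot]; trivial
  refine hf (MvPolynomial.funext fun x => ?_)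
  by_contra hx
  exact h (Function.curry x) (by simpa using hx)

theorem eventually_generic_mulVec_injective {m n : Type*} [Finite m] [Fintype n]
    (M : Matrix m n (MvPolynomial (V × ι) K)) {p₀ : V → ι → K}
    (h₀ : Function.Injective (M.map (MvPolynomial.eval (Function.uncurry p₀))).mulVec) :
    ∀ᶠ p in genericFilter V K ι,
      Function.Injective (M.map (MvPolynomial.eval (Function.uncurry p))).mulVec := by
  classical
  have := Fintype.ofFinite m
  obtain ⟨N, hN⟩ : ∃ N : Matrix n m K,
      N * M.map (MvPolynomial.eval (Function.uncurry p₀)) = 1 := by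
    obtain ⟨g, hg⟩ := LinearMap.exists_leftInverse_of_injective
      (Matrix.toLin' (M.map (MvPolynomial.eval (Function.uncurry p₀))))
      (LinearMap.ker_eq_bot.mpr h₀)
    refine ⟨LinearMap.toMatrix' g, ?_⟩
    rw [← LinearMap.toMatrix'_toLin' (M.map _), ← LinearMap.toMatrix'_comp, hg,
      LinearMap.toMatrix'_id]
  let P := N.map (MvPolynomial.C : K →+* MvPolynomial (V × ι) K) * M
  have hdet : ∀ p : V → ι → K, MvPolynomial.eval (Function.uncurry p) P.det
      = (N * M.map (MvPolynomial.eval (Function.uncurry p))).det := by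
    intro p
    rw [RingHom.map_det]
    congr 1
    ext i j
    simp [P, Matrix.mul_apply]
  refine eventually_generic_of_eval P.det (p₀ := p₀) ?_ fun p hp => ?_
  · rw [hdet, hN, Matrix.det_one]
    exact one_ne_zero
  · rw [hdet, ← isUnit_iff_ne_zero, ← Matrix.isUnit_iff_isUnit_det,
      ← Matrix.mulVec_injective_iff_isUnit] at hp
    refine Function.Injective.of_comp (f := N.mulVec) ?_
    simpa only [Function.comp_def, Matrix.mulVec_mulVec] using hp

end Generic

section GeneralPosition

variable {V K ι : Type*} [Field K] [Fintype ι]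

/-- The points of `p` on `S` are in linearly general position. -/
def InGeneralPosition (p : V → ι → K) (S : Finset V) : Prop :=
  ∀ T ⊆ S, T.card ≤ Fintype.card ι → LinearIndepOn K p T

theorem span_eq_top_of_linearIndepOn {p : V → ι → K} {T : Finset V} (hT : LinearIndepOn K p T)
    (hcard : T.card = Fintype.card ι) : Submodule.span K (p '' T) = ⊤ := by
  rw [Set.image_eq_range]
  exact hT.linearIndependent.span_eq_top_of_card_eq_finrank' (by simp [hcard])

theorem InGeneralPosition.span_eq_top {p : V → ι → K} {S T : Finset V}
    (hp : InGeneralPosition p S) (hTS : T ⊆ S) (hcard : Fintype.card ι ≤ T.card) :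
    Submodule.span K (p '' T) = ⊤ := by
  obtain ⟨U, hUT, hU⟩ := exists_subset_card_eq hcard
  exact top_unique <| (span_eq_top_of_linearIndepOn (hp U (hUT.trans hTS) hU.le) hU).ge.trans
    (Submodule.span_mono (Set.image_mono (coe_subset.mpr hUT)))

theorem eventually_linearIndepOn {T : Finset V} (hT : T.card ≤ Fintype.card ι) :
    ∀ᶠ p in genericFilter V K ι, LinearIndepOn K p T := by
  classical
  let M : Matrix ι T (MvPolynomial (V × ι) K) := .of fun l v => MvPolynomial.X (v.1, l)
  have hM : ∀ p : V → ι → K, Function.Injective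
      (M.map (MvPolynomial.eval (Function.uncurry p))).mulVec ↔ LinearIndepOn K p T := by
    intro p
    have hcol : (M.map (MvPolynomial.eval (Function.uncurry p))).col = fun v : T => p v := by
      ext v l
      simp [M]
    rw [Matrix.mulVec_injective_iff, hcol]
    rfl
  obtain ⟨e⟩ : Nonempty (T ↪ ι) := Function.Embedding.nonempty_of_card_le (by simpa using hT)
  let p₀ : V → ι → K := fun v => if h : v ∈ T then Pi.single (e ⟨v, h⟩) 1 else 0
  have hp₀ : LinearIndepOn K p₀ T := by
    have hres : (fun v : T => p₀ v) = (fun l => Pi.single l (1 : K)) ∘ e := by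
      ext v : 1
      simp [p₀]
    rw [LinearIndepOn]
    change LinearIndependent K fun v : T => p₀ v
    rw [hres]
    exact (Pi.linearIndependent_single_one ι K).comp e e.injective
  filter_upwards [eventually_generic_mulVec_injective M ((hM p₀).mpr hp₀)] with p hp
  exact (hM p).mp hp

theorem eventually_inGeneralPosition (S : Finset V) :
    ∀ᶠ p in genericFilter V K ι, InGeneralPosition p S := by
  have h : ∀ᶠ p in genericFilter V K ι,
      ∀ T ∈ S.powerset, T.card ≤ Fintype.card ι → LinearIndepOn K p T :=
    (Filter.eventually_all_finset _).mpr fun T _ =>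
      Filter.eventually_imp_distrib_left.mpr eventually_linearIndepOn
  filter_upwards [h] with p hp T hT using hp T (mem_powerset.mpr hT)

end GeneralPosition

/-! ### Semicontinuity of rigidity -/

section BarMatrix

open Classical in
/-- The rigidity matrix of the bars `e k`, with columns only for the vertices in `R`: its kernel
consists of the motions that vanish off `R`. -/
noncomputable def barMatrix {V A ι κ : Type*} [Ring A] (R : Finset V) (e : κ → V × V)
    (p : V → ι → A) : Matrix κ (R × ι) A :=
  .of fun k c => (if c.1 = (e k).1 then p (e k).2 c.2 else 0) -
    (if c.1 = (e k).2 then p (e k).1 c.2 else 0)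

variable {V K ι κ : Type*}

theorem barMatrix_map {A B : Type*} [Ring A] [Ring B] (f : A →+* B) (R : Finset V)
    (e : κ → V × V) (p : V → ι → A) :
    (barMatrix R e p).map f = barMatrix R e fun v l => f (p v l) := by
  ext k c
  simp [barMatrix, apply_ite f]

theorem exists_extension_by_zero {A : Type*} [Zero A] {R : Finset V} (y : R × ι → A) :
    ∃ x : V → ι → A, (∀ v ∉ R, x v = 0) ∧ (fun c : R × ι => x c.1 c.2) = y := by
  classical
  exact ⟨fun v => if h : v ∈ R then fun l => y (⟨v, h⟩, l) else 0, fun v hv => dif_neg hv,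
    funext fun c => by simp⟩

variable [Fintype ι]

theorem barMatrix_mulVec {A : Type*} [CommRing A] {R : Finset V} (e : κ → V × V)
    (p : V → ι → A) {x : V → ι → A} (hx : ∀ v ∉ R, x v = 0) :
    barMatrix R e p *ᵥ (fun c => x c.1 c.2) =
      fun k => p (e k).2 ⬝ᵥ x (e k).1 - p (e k).1 ⬝ᵥ x (e k).2 := by
  classical
  have hsum : ∀ (v : V) (a : ι → A),
      ∑ c : R × ι, (if c.1 = v then a c.2 else 0) * x c.1 c.2 = a ⬝ᵥ x v := by
    intro v a
    calc ∑ c : R × ι, (if (c.1 : V) = v then a c.2 else 0) * x c.1 c.2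
        = ∑ w ∈ R, if w = v then a ⬝ᵥ x w else 0 := by
          rw [Fintype.sum_prod_type, ← Finset.sum_coe_sort R]
          refine sum_congr rfl fun w _ => ?_
          split_ifs with hw <;> simp [dotProduct]
      _ = a ⬝ᵥ x v := by
          rw [Finset.sum_ite_eq']
          split_ifs with hv
          · rfl
          · rw [hx v hv, dotProduct_zero]
  ext k
  calc (barMatrix R e p *ᵥ fun c => x c.1 c.2) k
      = ∑ c : R × ι, ((if c.1 = (e k).1 then p (e k).2 c.2 else 0) * x c.1 c.2 -
          (if c.1 = (e k).2 then p (e k).1 c.2 else 0) * x c.1 c.2) := by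
        simp only [barMatrix, Matrix.mulVec, dotProduct, Matrix.of_apply, sub_mul]
    _ = _ := by rw [sum_sub_distrib, hsum, hsum]

variable [Field K]

theorem barMatrix_mulVec_injective_iff {R : Finset V} {e : κ → V × V} {p : V → ι → K} :
    Function.Injective (barMatrix R e p).mulVec ↔
      ∀ x : V → ι → K, (∀ k, p (e k).2 ⬝ᵥ x (e k).1 = p (e k).1 ⬝ᵥ x (e k).2) →
        (∀ v ∉ R, x v = 0) → x = 0 := by
  rw [← Matrix.coe_mulVecLin, injective_iff_map_eq_zero]
  simp only [Matrix.mulVecLin_apply]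
  constructor
  · intro hinj x hbars hx
    have hres := hinj (fun c => x c.1 c.2) <| by
      rw [barMatrix_mulVec e p hx]
      exact funext fun k => sub_eq_zero.mpr (hbars k)
    ext v l
    by_cases hv : v ∈ R
    · exact congrFun hres (⟨v, hv⟩, l)
    · rw [hx v hv]
      rfl
  · intro hinj y hy
    obtain ⟨x, hx, rfl⟩ := exists_extension_by_zero y
    rw [barMatrix_mulVec e p hx] at hy
    rw [hinj x (fun k => sub_eq_zero.mp (congrFun hy k)) hx]
    rfl

theorem exists_motion_ne_zero {D : Finset (Finset V)} (hD : ∀ e ∈ D, e.card = 2) {R : Finset V}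
    (hcard : D.card < Fintype.card ι * R.card) (p : V → ι → K) :
    ∃ x, IsMotion D p x ∧ (∀ v ∉ R, x v = 0) ∧ x ≠ 0 := by
  classical
  have hends : ∀ e : D, ∃ q : V × V, (e : Finset V) = {q.1, q.2} := fun e => by
    obtain ⟨a, b, -, he⟩ := card_eq_two.mp (hD e e.2)
    exact ⟨(a, b), he⟩
  choose q hq using hends
  have hninj : ¬ Function.Injective (barMatrix R q p).mulVec := by
    intro hinj
    have := LinearMap.finrank_le_finrank_of_injective (f := (barMatrix R q p).mulVecLin) hinj
    simp only [Module.finrank_fintype_fun_eq_card, Fintype.card_prod, Fintype.card_coe] at this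
    exact absurd (this.trans_lt hcard) (by rw [mul_comm]; exact lt_irrefl _)
  rw [barMatrix_mulVec_injective_iff] at hninj
  push Not at hninj
  obtain ⟨x, hbars, hx, hx0⟩ := hninj
  refine ⟨x, fun e he i hi j hj => ?_, hx, hx0⟩
  have hbar := hbars ⟨e, he⟩
  have hends := hq ⟨e, he⟩
  simp only at hends
  rw [hends, mem_insert, mem_singleton] at hi hj
  rcases hi with rfl | rfl <;> rcases hj with rfl | rfl
  exacts [rfl, hbar, hbar.symm, rfl]

end BarMatrix

section Semicontinuity

variable {V K ι : Type*} [Field K] [Fintype ι] {F : Finset (Finset V)} {S σ₀ : Finset V}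

theorem isRigidOn_iff_pinned [DecidableEq V] (hFS : ∀ σ ∈ F, σ ⊆ S) (hσ₀ : σ₀ ∈ F)
    {p : V → ι → K} (hspan : Submodule.span K (p '' σ₀) = ⊤) :
    IsRigidOn F S p ↔ ∀ x, IsMotion F p x → (∀ v ∉ S \ σ₀, x v = 0) → x = 0 := by
  simp only [mem_sdiff, not_and_or, not_not]
  constructor
  · intro hrigid x hx hx0
    obtain ⟨A, -, hA⟩ := hrigid x hx
    obtain rfl : A = 0 := matrix_eq_of_eqOn hspan fun i hi => by
      simpa [hx0 i (Or.inr hi)] using (hA (hFS σ₀ hσ₀ hi)).symm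
    ext1 v
    by_cases hv : v ∈ S
    · simpa using hA hv
    · exact hx0 v (Or.inl hv)
  · intro hpinned x hx
    obtain ⟨A, hA, hxA⟩ := exists_isSymm_of_dotProduct_comm hspan (hx σ₀ hσ₀)
    have hzero := hpinned (fun v => if v ∈ S then x v - A *ᵥ p v else 0)
      (fun σ hσ i hi j hj => ?_) (fun v hv => ?_)
    · exact ⟨A, hA, fun v hv => sub_eq_zero.mp (by simpa [mem_coe.mp hv] using congrFun hzero v)⟩
    · simp only [if_pos (hFS σ hσ hi), if_pos (hFS σ hσ hj), dotProduct_sub]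
      rw [hx σ hσ i hi j hj, dotProduct_mulVec_comm_of_isSymm hA]
    · rcases hv with hv | hv
      · exact if_neg hv
      · simp [hxA hv]

theorem eventually_isRigidOn (hFS : ∀ σ ∈ F, σ ⊆ S) (hσ₀ : σ₀ ∈ F)
    (hcard : σ₀.card = Fintype.card ι) {p₀ : V → ι → K} (hp₀ : LinearIndepOn K p₀ σ₀)
    (hrigid : IsRigidOn F S p₀) : ∀ᶠ p in genericFilter V K ι, IsRigidOn F S p := by
  classical
  let bar : (Σ σ : F, σ.1 × σ.1) → V × V := fun b => (b.2.1, b.2.2)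
  let M := barMatrix (S \ σ₀) bar fun v l => (MvPolynomial.X (v, l) : MvPolynomial (V × ι) K)
  have hM : ∀ p : V → ι → K, Submodule.span K (p '' σ₀) = ⊤ →
      (Function.Injective (M.map (MvPolynomial.eval (Function.uncurry p))).mulVec ↔
        IsRigidOn F S p) := by
    intro p hspan
    rw [barMatrix_map, isRigidOn_iff_pinned hFS hσ₀ hspan]
    simp only [MvPolynomial.eval_X, Function.uncurry_apply_pair]
    rw [barMatrix_mulVec_injective_iff]
    simp only [IsMotion, Sigma.forall, Prod.forall, Subtype.forall, bar]
  filter_upwards [eventually_linearIndepOn hcard.le, eventually_generic_mulVec_injective M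
    ((hM p₀ (span_eq_top_of_linearIndepOn hp₀ hcard)).mpr hrigid)] with p hp hinj
  exact (hM p (span_eq_top_of_linearIndepOn hp hcard)).mp hinj

end Semicontinuity

/-! ### Vertex splitting -/

/-- The simplicial map that identifies `v` with `u`. -/
def contraction {V : Type*} [DecidableEq V] (u v : V) : V → V :=
  Function.update id v u

theorem contraction_self {V : Type*} [DecidableEq V] (u v : V) : contraction u v v = u :=
  Function.update_self ..

theorem contraction_of_ne {V : Type*} [DecidableEq V] (u : V) {v w : V} (hw : w ≠ v) :
    contraction u v w = w :=
  Function.update_of_ne hw ..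

theorem IsRigidOn.vertex_split {V K ι : Type*} [DecidableEq V] [Field K] [Fintype ι]
    {F : Finset (Finset V)} {S S' C : Finset V} {u v : V} {p : V → ι → K}
    (hrigid : IsRigidOn (F.image (image (contraction u v))) S' p)
    (hS : S.image (contraction u v) ⊆ S')
    (hCu : ∀ c ∈ C, ∃ σ ∈ F, u ∈ σ ∧ c ∈ σ) (hCv : ∀ c ∈ C, ∃ σ ∈ F, v ∈ σ ∧ c ∈ σ)
    (hvC : v ∉ C) (hspan : Submodule.span K (p '' (insert u C : Finset V)) = ⊤) :
    IsRigidOn (insert {u, v} F) S (p ∘ contraction u v) := by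
  intro x hx
  have huu : contraction u v u = u := by
    rcases eq_or_ne u v with rfl | huv
    exacts [contraction_self u u, contraction_of_ne u huv]
  have hbar : ∀ σ ∈ F, ∀ i ∈ σ, ∀ j ∈ σ,
      p (contraction u v j) ⬝ᵥ x i = p (contraction u v i) ⬝ᵥ x j :=
    fun σ hσ => hx σ (mem_insert_of_mem hσ)
  have hxuv : x u = x v := by
    refine eq_of_dotProduct_eq_of_span_eq_top hspan fun c hc => ?_
    rcases mem_insert.mp hc with rfl | hc
    · simpa [huu, contraction_self] using hx _ (mem_insert_self _ _) c (by simp) v (by simp)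
    · obtain ⟨σ, hσ, huσ, hcσ⟩ := hCu c hc
      obtain ⟨τ, hτ, hvτ, hcτ⟩ := hCv c hc
      have hcu := hbar σ hσ u huσ c hcσ
      have hcv := hbar τ hτ v hvτ c hcτ
      rw [contraction_of_ne u (ne_of_mem_of_not_mem hc hvC), huu] at hcu
      rw [contraction_of_ne u (ne_of_mem_of_not_mem hc hvC), contraction_self] at hcv
      rw [hcu, hcv]
  have hxf : ∀ w, x (contraction u v w) = x w := by
    intro w
    rcases eq_or_ne w v with rfl | hw
    · rw [contraction_self, hxuv]
    · rw [contraction_of_ne u hw]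
  obtain ⟨A, hA, hxA⟩ := hrigid x <| by
    simp only [IsMotion, forall_mem_image, hxf]
    exact hbar
  exact ⟨A, hA, fun w hw => (hxf w).symm.trans (hxA (hS (mem_image_of_mem _ hw)))⟩

/-! ### Simplicial cycles mod 2 -/

theorem filter_powersetCard_image_of_injOn {V V' : Type*} [DecidableEq V'] {f : V → V'}
    {σ : Finset V} (hf : Set.InjOn f σ) {ρ' : Finset V'} (hρ' : ρ' ⊆ σ.image f) :
    (σ.powersetCard ρ'.card).filter (fun ρ => ρ.image f = ρ') = {σ.filter (f · ∈ ρ')} := by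
  have himage : (σ.filter (f · ∈ ρ')).image f = ρ' := by
    rw [← filter_image (p := (· ∈ ρ')), filter_mem_eq_inter, inter_eq_right.mpr hρ']
  ext ρ
  rw [mem_filter, mem_powersetCard, mem_singleton]
  constructor
  · rintro ⟨⟨hρσ, -⟩, hρ⟩
    refine image_injOn_powerset_of_injOn hf ?_ ?_ (hρ.trans himage.symm)
    exacts [mem_powerset.mpr hρσ, mem_powerset.mpr (filter_subset _ _)]
  · rintro rfl
    refine ⟨⟨filter_subset _ _, ?_⟩, himage⟩
    rw [← card_image_of_injOn (hf.mono (filter_subset _ _)), himage]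

theorem even_card_filter_mem_iff {α β : Type*} [DecidableEq β] (s : Finset α) (t : Finset β)
    (g : α → β) :
    Even (s.filter (g · ∈ t)).card ↔
      Even (t.filter fun b => Odd (s.filter (g · = b)).card).card := by
  have hmaps : Set.MapsTo g (s.filter (g · ∈ t)) t := fun a ha => (mem_filter.mp ha).2
  rw [← even_sum_iff_even_card_odd, card_eq_sum_card_fiberwise hmaps]
  refine iff_of_eq <| congrArg Even <| sum_congr rfl fun b hb => congrArg card ?_
  ext a
  simp only [mem_filter]
  exact ⟨fun h => ⟨h.1.1, h.2⟩, fun h => ⟨⟨h.1, h.2 ▸ hb⟩, h.2⟩⟩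

section Cycles

variable {V : Type*} [DecidableEq V] {k : ℕ} {Z W : Finset (Finset V)}

/-- The members of the chain `Z` that contain `ρ`. -/
def cofaces (Z : Finset (Finset V)) (ρ : Finset V) : Finset (Finset V) :=
  Z.filter (ρ ⊆ ·)

/-- Simplicial `k`-cycles with coefficients in `ℤ/2`, a chain being encoded as its support. -/
def IsModTwoCycle (k : ℕ) (Z : Finset (Finset V)) : Prop :=
  (∀ σ ∈ Z, σ.card = k + 1) ∧ ∀ ρ : Finset V, ρ.card = k → Even (cofaces Z ρ).card

/-- Nonzero mod 2 cycles that contain no smaller nonzero cycle; Fogelsanger's minimal cycles. -/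
def IsMinimalCycle (k : ℕ) (Z : Finset (Finset V)) : Prop :=
  Minimal (fun W => IsModTwoCycle k W ∧ W.Nonempty) Z

theorem mem_cofaces {ρ σ : Finset V} : σ ∈ cofaces Z ρ ↔ σ ∈ Z ∧ ρ ⊆ σ :=
  mem_filter

theorem IsModTwoCycle.sdiff (hZ : IsModTwoCycle k Z) (hW : IsModTwoCycle k W) (hWZ : W ⊆ Z) :
    IsModTwoCycle k (Z \ W) := by
  refine ⟨fun σ hσ => hZ.1 σ (mem_sdiff.mp hσ).1, fun ρ hρ => ?_⟩
  have hsub : cofaces W ρ ⊆ cofaces Z ρ := filter_subset_filter _ hWZ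
  have hsdiff : cofaces (Z \ W) ρ = cofaces Z ρ \ cofaces W ρ := by
    ext σ
    simp only [mem_cofaces, mem_sdiff]
    tauto
  rw [hsdiff, card_sdiff_of_subset hsub, Nat.even_sub (card_le_card hsub)]
  exact iff_of_true (hZ.2 ρ hρ) (hW.2 ρ hρ)

theorem IsModTwoCycle.exists_isMinimalCycle (hZ : IsModTwoCycle k Z) {τ : Finset V} (hτ : τ ∈ Z) :
    ∃ W ⊆ Z, IsMinimalCycle k W ∧ τ ∈ W := by
  obtain ⟨W, hWZ, ⟨hW, hτW⟩, hmin⟩ :=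
    exists_minimal_le_of_wellFoundedLT (fun W => IsModTwoCycle k W ∧ τ ∈ W) Z ⟨hZ, hτ⟩
  refine ⟨W, hWZ, ⟨⟨hW, τ, hτW⟩, fun U ⟨hU, hUne⟩ hUW => ?_⟩, hτW⟩
  by_cases hτU : τ ∈ U
  · exact hmin ⟨hU, hτU⟩ hUW
  · obtain ⟨υ, hυ⟩ := hUne
    have hWU := hmin ⟨hW.sdiff hU hUW, mem_sdiff.mpr ⟨hτW, hτU⟩⟩ sdiff_subset
    exact absurd hυ (mem_sdiff.mp (hWU (hUW hυ))).2

theorem sum_card_cofaces_insert (hW : ∀ σ ∈ W, σ.card = k + 1) {π : Finset V}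
    (hπ : π.card + 1 = k) :
    ∑ b ∈ W.sup id \ π, (cofaces W (insert b π)).card = (cofaces W π).card * 2 := by
  calc ∑ b ∈ W.sup id \ π, (cofaces W (insert b π)).card
      = ∑ b ∈ W.sup id \ π, ((cofaces W π).filter (b ∈ ·)).card := by
        refine sum_congr rfl fun b _ => congrArg card ?_
        ext σ
        simp only [mem_cofaces, mem_filter, insert_subset_iff]
        tauto
    _ = ∑ σ ∈ cofaces W π, ((W.sup id \ π).filter (· ∈ σ)).card :=
        sum_card_bipartiteAbove_eq_sum_card_bipartiteBelow _
    _ = (cofaces W π).card * 2 := by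
        refine sum_const_nat fun σ hσ => ?_
        obtain ⟨hσW, hπσ⟩ := mem_cofaces.mp hσ
        have hsdiff : (W.sup id \ π).filter (· ∈ σ) = σ \ π := by
          ext b
          simp only [mem_filter, mem_sdiff]
          exact ⟨fun h => ⟨h.2, h.1.2⟩, fun h => ⟨⟨mem_sup.mpr ⟨σ, hσW, h.1⟩, h.2⟩, h.1⟩⟩
        rw [hsdiff, card_sdiff_of_subset hπσ, hW σ hσW]
        lia

theorem exists_odd_card_cofaces_insert (hW : ∀ σ ∈ W, σ.card = k + 1) {π : Finset V}
    (hπ : π.card + 1 = k) {a : V} (ha : a ∉ π) (hodd : Odd (cofaces W (insert a π)).card) :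
    ∃ b ∉ π, b ≠ a ∧ Odd (cofaces W (insert b π)).card := by
  have heven : Even ((W.sup id \ π).filter fun b => Odd (cofaces W (insert b π)).card).card := by
    rw [← even_sum_iff_even_card_odd, sum_card_cofaces_insert hW hπ]
    exact even_two.mul_left _
  have hmem : a ∈ (W.sup id \ π).filter fun b => Odd (cofaces W (insert b π)).card := by
    obtain ⟨σ, hσ⟩ := card_pos.mp hodd.pos
    obtain ⟨hσW, haσ⟩ := mem_cofaces.mp hσ
    exact mem_filter.mpr ⟨mem_sdiff.mpr
      ⟨mem_sup.mpr ⟨σ, hσW, haσ (mem_insert_self _ _)⟩, ha⟩, hodd⟩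
  have hone : 1 < ((W.sup id \ π).filter fun b => Odd (cofaces W (insert b π)).card).card :=
    lt_of_le_of_ne (card_pos.mpr ⟨a, hmem⟩) fun h => by simp [← h] at heven
  obtain ⟨b, hb, hba⟩ := exists_mem_ne hone a
  obtain ⟨hb, hbodd⟩ := mem_filter.mp hb
  exact ⟨b, (mem_sdiff.mp hb).2, hba, hbodd⟩

theorem isModTwoCycle_of_even_off (hW : ∀ σ ∈ W, σ.card = k + 1) (v : V)
    (heven : ∀ ρ : Finset V, ρ.card = k → v ∉ ρ → Even (cofaces W ρ).card) :
    IsModTwoCycle k W := by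
  refine ⟨hW, fun ρ hρ => ?_⟩
  by_cases hvρ : v ∈ ρ
  · have hcard : (ρ.erase v).card + 1 = k := (card_erase_add_one hvρ).trans hρ
    refine Nat.not_odd_iff_even.mp fun hodd => ?_
    rw [← insert_erase hvρ] at hodd
    obtain ⟨b, hb, hbv, hbodd⟩ := exists_odd_card_cofaces_insert hW hcard (notMem_erase v ρ) hodd
    refine Nat.not_even_iff_odd.mpr hbodd (heven _ ((card_insert_of_notMem hb).trans hcard) ?_)
    simp [hbv.symm]
  · exact heven ρ hρ hvρ

theorem IsMinimalCycle.eq_of_forall_ridge (hZ : IsMinimalCycle k Z) (hWZ : W ⊆ Z) (hW : W.Nonempty)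
    (v : V) (hclosed : ∀ ρ : Finset V, ρ.card = k → v ∉ ρ → ∀ σ ∈ cofaces W ρ, ∀ τ ∈ cofaces Z ρ,
      τ ∈ W) : W = Z := by
  refine hWZ.antisymm (hZ.le_of_le ⟨isModTwoCycle_of_even_off
    (fun σ hσ => hZ.prop.1.1 σ (hWZ hσ)) v fun ρ hρ hvρ => ?_, hW⟩ hWZ)
  rcases (cofaces W ρ).eq_empty_or_nonempty with hempty | ⟨σ, hσ⟩
  · simp [hempty]
  · have hfull : cofaces W ρ = cofaces Z ρ := by
      refine (filter_subset_filter _ hWZ).antisymm fun τ hτ => ?_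
      exact mem_cofaces.mpr ⟨hclosed ρ hρ hvρ σ hσ τ hτ, (mem_cofaces.mp hτ).2⟩
    exact hfull ▸ hZ.prop.1.2 ρ hρ

variable {V' : Type*} [DecidableEq V']

/-- The pushforward of a `k`-chain mod 2 along a map of vertices. -/
def pushforward (k : ℕ) (f : V → V') (Z : Finset (Finset V)) : Finset (Finset V') :=
  (Z.image (image f)).filter fun σ' =>
    σ'.card = k + 1 ∧ Odd (Z.filter fun σ => σ.image f = σ').card

theorem filter_powersetCard_image_eq_pair {f : V → V'} {ρ : Finset V} {a b : V} (ha : a ∉ ρ)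
    (hb : b ∈ ρ) (hfb : f b = f a) (hcard : (ρ.image f).card = ρ.card) :
    ((insert a ρ).powersetCard ρ.card).filter (fun τ => τ.image f = ρ.image f) =
      {ρ, insert a (ρ.erase b)} := by
  have hab : a ≠ b := (ne_of_mem_of_not_mem hb ha).symm
  have hswap : (insert a (ρ.erase b)).card = ρ.card := by
    rw [card_insert_of_notMem fun h => ha (mem_of_mem_erase h), card_erase_add_one hb]
  ext τ
  rw [mem_filter, mem_powersetCard, mem_insert, mem_singleton]
  constructor
  · rintro ⟨⟨hτσ, hτcard⟩, hτf⟩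
    refine or_iff_not_imp_left.mpr fun hτρ => ?_
    have haτ : a ∈ τ := by_contra fun haτ => hτρ <|
      eq_of_subset_of_card_le ((subset_insert_iff_of_notMem haτ).mp hτσ) hτcard.ge
    have hbτ : b ∉ τ := fun hbτ =>
      hab (card_image_iff.mp (by rw [hτf, hcard, hτcard]) haτ hbτ hfb.symm)
    refine eq_of_subset_of_card_le (fun c hc => ?_) (hswap.trans hτcard.symm).le
    have := mem_insert.mp (hτσ hc)
    have := ne_of_mem_of_not_mem hc hbτ
    simp only [mem_insert, mem_erase]
    tauto
  · rintro (rfl | rfl)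
    · exact ⟨⟨subset_insert a τ, rfl⟩, rfl⟩
    · refine ⟨⟨insert_subset_insert a (erase_subset b ρ), hswap⟩, ?_⟩
      rw [image_insert, ← hfb, ← image_insert, insert_erase hb]

theorem even_card_facets_over_of_card_image_le {α : Type*} {f : α → V'} {σ : Finset α}
    (hσ : σ.card = k + 1) (hf : (σ.image f).card ≤ k) {ρ' : Finset V'} (hρ' : ρ'.card = k) :
    Even ((σ.powersetCard k).filter fun ρ => ρ.image f = ρ').card := by
  classical
  rcases ((σ.powersetCard k).filter fun ρ => ρ.image f = ρ').eq_empty_or_nonempty with h | ⟨ρ, hρ⟩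
  · simp [h]
  rw [mem_filter, mem_powersetCard] at hρ
  obtain ⟨⟨hρσ, rfl⟩, rfl⟩ := hρ
  obtain ⟨a, haρ, rfl⟩ : ∃ a ∉ ρ, insert a ρ = σ := exists_eq_insert_iff.mpr ⟨hρσ, hσ.symm⟩
  have hσf : ρ.image f = (insert a ρ).image f :=
    eq_of_subset_of_card_le (image_subset_image hρσ) (hf.trans hρ'.ge)
  obtain ⟨b, hbρ, hfb⟩ : ∃ b ∈ ρ, f b = f a :=
    mem_image.mp (hσf ▸ mem_image_of_mem f (mem_insert_self a ρ))
  rw [filter_powersetCard_image_eq_pair haρ hbρ hfb hρ',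
    card_pair (ne_of_mem_of_not_mem' (mem_insert_self a _) haρ).symm]
  exact even_two

theorem odd_card_facets_over_iff {α : Type*} (f : α → V') {σ : Finset α} (hσ : σ.card = k + 1)
    {ρ' : Finset V'} (hρ' : ρ'.card = k) :
    Odd ((σ.powersetCard k).filter fun ρ => ρ.image f = ρ').card ↔
      (σ.image f).card = k + 1 ∧ ρ' ⊆ σ.image f := by
  rcases (card_image_le.trans_eq hσ : (σ.image f).card ≤ k + 1).eq_or_lt with hcard | hcard
  · rw [and_iff_right hcard]
    constructor
    · intro hodd
      obtain ⟨ρ, hρ⟩ := card_pos.mp hodd.pos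
      obtain ⟨hρσ, rfl⟩ := mem_filter.mp hρ
      exact image_subset_image (mem_powersetCard.mp hρσ).1
    · intro hsub
      subst hρ'
      rw [filter_powersetCard_image_of_injOn (card_image_iff.mp (hcard.trans hσ.symm)) hsub]
      exact odd_one
  · refine iff_of_false (Nat.not_odd_iff_even.mpr ?_) fun h => hcard.ne h.1
    exact even_card_facets_over_of_card_image_le hσ (Nat.lt_succ_iff.mp hcard) hρ'

theorem IsModTwoCycle.pushforward (hZ : IsModTwoCycle k Z) (f : V → V') :
    IsModTwoCycle k (pushforward k f Z) := by
  refine ⟨fun σ' hσ' => (mem_filter.mp hσ').2.1, fun ρ' hρ' => ?_⟩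
  let R := (Z.biUnion (powersetCard k)).filter fun ρ => ρ.image f = ρ'
  have hcount : ∑ ρ ∈ R, (cofaces Z ρ).card =
      ∑ σ ∈ Z, ((σ.powersetCard k).filter fun ρ => ρ.image f = ρ').card := by
    refine (sum_card_bipartiteAbove_eq_sum_card_bipartiteBelow _).trans
      (sum_congr rfl fun σ hσ => congrArg card ?_)
    ext ρ
    simp only [bipartiteBelow, R, mem_filter, mem_biUnion, mem_powersetCard]
    exact ⟨fun ⟨⟨⟨_, _, _, hcard⟩, hf⟩, hρσ⟩ => ⟨⟨hρσ, hcard⟩, hf⟩,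
      fun ⟨⟨hρσ, hcard⟩, hf⟩ => ⟨⟨⟨σ, hσ, hρσ, hcard⟩, hf⟩, hρσ⟩⟩
  have heven : Even (∑ ρ ∈ R, (cofaces Z ρ).card) := even_sum _ fun ρ hρ => by
    obtain ⟨σ, -, hρσ⟩ := mem_biUnion.mp (mem_filter.mp hρ).1
    exact hZ.2 ρ (mem_powersetCard.mp hρσ).2
  rw [hcount, even_sum_iff_even_card_odd] at heven
  let t := (Z.image (image f)).filter fun σ' => σ'.card = k + 1 ∧ ρ' ⊆ σ'
  have hfibre : (Z.filter fun σ => σ.image f ∈ t) = Z.filter fun σ =>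
      Odd ((σ.powersetCard k).filter fun ρ => ρ.image f = ρ').card := by
    refine filter_congr fun σ hσ => ?_
    rw [odd_card_facets_over_iff f (hZ.1 σ hσ) hρ', mem_filter]
    exact and_iff_right (mem_image_of_mem _ hσ)
  have hpush : cofaces (Hyperconnectivity.pushforward k f Z) ρ' =
      t.filter fun σ' => Odd (Z.filter fun σ => σ.image f = σ').card := by
    ext σ'
    simp only [cofaces, Hyperconnectivity.pushforward, t, mem_filter]
    tauto
  rw [hpush, ← even_card_filter_mem_iff, hfibre]
  exact heven

end Cycles

/-! ### Contracting an edge of a minimal cycle -/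

section Contraction

variable {V : Type*} [DecidableEq V] {k : ℕ} {Z Z' : Finset (Finset V)} {σ τ : Finset V} {u v w : V}

theorem mem_image_contraction :
    w ∈ σ.image (contraction u v) ↔ w ≠ v ∧ w ∈ σ ∨ w = u ∧ v ∈ σ := by
  simp only [mem_image, contraction, Function.update_apply, id]
  grind

theorem contraction_injOn (h : ¬(u ∈ σ ∧ v ∈ σ)) : Set.InjOn (contraction u v) σ := by
  intro a ha b hb hab
  rw [mem_coe] at ha hb
  simp only [contraction, Function.update_apply, id] at hab
  grind

theorem card_image_contraction_lt (huv : u ≠ v) (hu : u ∈ σ) (hv : v ∈ σ) :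
    (σ.image (contraction u v)).card < σ.card :=
  card_image_le.lt_of_ne fun h => huv <| card_image_iff.mp h (mem_coe.mpr hu) (mem_coe.mpr hv) <| by
    rw [contraction_self, contraction_of_ne u huv]

/-- The part of the chain `Z` that the contraction of `uv` maps into `Z'`. -/
def liftedChain (u v : V) (Z Z' : Finset (Finset V)) : Finset (Finset V) :=
  Z.filter fun σ => σ.image (contraction u v) ∈ Z'

theorem liftedChain_subset : liftedChain u v Z Z' ⊆ Z :=
  filter_subset _ _

theorem not_mem_and_mem_of_mem_liftedChain (hZ : ∀ σ ∈ Z, σ.card = k + 1)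
    (hZ' : ∀ σ ∈ Z', σ.card = k + 1) (huv : u ≠ v) (hσ : σ ∈ liftedChain u v Z Z') :
    ¬(u ∈ σ ∧ v ∈ σ) := by
  rintro ⟨hu, hv⟩
  obtain ⟨hσZ, hσZ'⟩ := mem_filter.mp hσ
  exact (card_image_contraction_lt huv hu hv).ne ((hZ' _ hσZ').trans (hZ σ hσZ).symm)

theorem even_card_liftedChain_over (hZ' : IsModTwoCycle k Z')
    (hsub : Z' ⊆ pushforward k (contraction u v) Z) {ρ : Finset V} (hρ : ρ.card = k) :
    Even ((liftedChain u v Z Z').filter fun σ => ρ ⊆ σ.image (contraction u v)).card := by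
  have hfibres : (cofaces Z' ρ).filter (fun σ' =>
      Odd (Z.filter fun σ => σ.image (contraction u v) = σ').card) = cofaces Z' ρ :=
    filter_true_of_mem fun σ' hσ' => (mem_filter.mp (hsub (mem_cofaces.mp hσ').1)).2.2
  have heven := (even_card_filter_mem_iff Z (cofaces Z' ρ) (image (contraction u v))).mpr
    (hfibres.symm ▸ hZ'.2 ρ hρ)
  simpa only [mem_cofaces, liftedChain, filter_filter] using heven

theorem even_card_cofaces_liftedChain (hZ' : IsModTwoCycle k Z')
    (hsub : Z' ⊆ pushforward k (contraction u v) Z) {ρ : Finset V} (hρ : ρ.card = k)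
    (hu : u ∉ ρ) (hv : v ∉ ρ) : Even (cofaces (liftedChain u v Z Z') ρ).card := by
  have hover : cofaces (liftedChain u v Z Z') ρ =
      (liftedChain u v Z Z').filter fun σ => ρ ⊆ σ.image (contraction u v) := by
    refine filter_congr fun σ _ => forall₂_congr fun a ha => ?_
    rw [mem_image_contraction]
    simp [ne_of_mem_of_not_mem ha hu, ne_of_mem_of_not_mem ha hv]
  exact hover ▸ even_card_liftedChain_over hZ' hsub hρ

theorem odd_card_cofaces_liftedChain_iff (hZ : ∀ σ ∈ Z, σ.card = k + 1) (hZ' : IsModTwoCycle k Z')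
    (hsub : Z' ⊆ pushforward k (contraction u v) Z) (huv : u ≠ v) {π : Finset V}
    (hπ : π.card + 1 = k) (hu : u ∉ π) (hv : v ∉ π) :
    Odd (cofaces (liftedChain u v Z Z') (insert u π)).card ↔
      Odd (cofaces (liftedChain u v Z Z') (insert v π)).card := by
  have hover : (liftedChain u v Z Z').filter (fun σ => insert u π ⊆ σ.image (contraction u v)) =
      cofaces (liftedChain u v Z Z') (insert u π) ∪
        cofaces (liftedChain u v Z Z') (insert v π) := by
    rw [cofaces, cofaces, ← filter_or]
    refine filter_congr fun σ _ => ?_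
    have hπσ : π ⊆ σ.image (contraction u v) ↔ π ⊆ σ := forall₂_congr fun a ha => by
      rw [mem_image_contraction]
      simp [ne_of_mem_of_not_mem ha hu, ne_of_mem_of_not_mem ha hv]
    rw [insert_subset_iff, insert_subset_iff, insert_subset_iff, hπσ, mem_image_contraction]
    simp [huv, or_and_right]
  have hdisj : Disjoint (cofaces (liftedChain u v Z Z') (insert u π))
      (cofaces (liftedChain u v Z Z') (insert v π)) := by
    refine disjoint_left.mpr fun σ huσ hvσ => ?_
    rw [mem_cofaces, insert_subset_iff] at huσ hvσ
    exact not_mem_and_mem_of_mem_liftedChain hZ hZ'.1 huv huσ.1 ⟨huσ.2.1, hvσ.2.1⟩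
  have heven := even_card_liftedChain_over hZ' hsub
    ((card_insert_of_notMem hu).trans hπ)
  rw [hover, card_union_of_disjoint hdisj, Nat.even_add] at heven
  rw [← Nat.not_even_iff_odd, ← Nat.not_even_iff_odd, heven]

theorem exists_odd_card_cofaces_liftedChain (hZ : IsMinimalCycle k Z) (hZ' : IsModTwoCycle k Z')
    (hsub : Z' ⊆ pushforward k (contraction u v) Z) (huv : u ≠ v) (hσ : σ ∈ Z) (huσ : u ∈ σ)
    (hvσ : v ∈ σ) (hτ : τ ∈ liftedChain u v Z Z') :
    ∃ π : Finset V, π.card + 1 = k ∧ u ∉ π ∧ v ∉ π ∧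
      Odd (cofaces (liftedChain u v Z Z') (insert u π)).card ∧
      Odd (cofaces (liftedChain u v Z Z') (insert v π)).card := by
  have hsplit := fun {υ} => not_mem_and_mem_of_mem_liftedChain (σ := υ) hZ.prop.1.1 hZ'.1 huv
  have hnotcycle : ¬ IsModTwoCycle k (liftedChain u v Z Z') := fun hcycle =>
    hsplit (hZ.le_of_le ⟨hcycle, τ, hτ⟩ liftedChain_subset hσ) ⟨huσ, hvσ⟩
  obtain ⟨ρ, hρ, hodd⟩ : ∃ ρ : Finset V, ρ.card = k ∧
      Odd (cofaces (liftedChain u v Z Z') ρ).card := by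
    by_contra! h
    exact hnotcycle ⟨fun σ hσ => hZ.prop.1.1 σ (liftedChain_subset hσ),
      fun ρ hρ => Nat.not_odd_iff_even.mp (h ρ hρ)⟩
  obtain ⟨υ, hυ⟩ := card_pos.mp hodd.pos
  obtain ⟨hυ, hρυ⟩ := mem_cofaces.mp hυ
  have hodd_iff := fun {π : Finset V} => odd_card_cofaces_liftedChain_iff hZ.prop.1.1 hZ' hsub huv
    (π := π)
  by_cases hu : u ∈ ρ
  · have hv : v ∉ ρ := fun hv => hsplit hυ ⟨hρυ hu, hρυ hv⟩
    have hcard : (ρ.erase u).card + 1 = k := (card_erase_add_one hu).trans hρ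
    have hv' : v ∉ ρ.erase u := fun h => hv (mem_of_mem_erase h)
    rw [← insert_erase hu] at hodd
    exact ⟨ρ.erase u, hcard, notMem_erase u ρ, hv', hodd,
      (hodd_iff hcard (notMem_erase u ρ) hv').mp hodd⟩
  · have hv : v ∈ ρ := by_contra fun hv =>
      Nat.not_odd_iff_even.mpr (even_card_cofaces_liftedChain hZ' hsub hρ hu hv) hodd
    have hcard : (ρ.erase v).card + 1 = k := (card_erase_add_one hv).trans hρ
    have hu' : u ∉ ρ.erase v := fun h => hu (mem_of_mem_erase h)
    rw [← insert_erase hv] at hodd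
    exact ⟨ρ.erase v, hcard, hu', notMem_erase v ρ,
      (hodd_iff hcard hu' (notMem_erase v ρ)).mpr hodd, hodd⟩

theorem exists_mem_of_odd_card_cofaces (hodd : Odd (cofaces Z (insert u τ)).card) (hw : w ∈ τ) :
    ∃ σ ∈ Z, u ∈ σ ∧ w ∈ σ := by
  obtain ⟨σ, hσ⟩ := card_pos.mp hodd.pos
  obtain ⟨hσ, hsub⟩ := mem_cofaces.mp hσ
  exact ⟨σ, hσ, hsub (mem_insert_self u τ), hsub (mem_insert_of_mem hw)⟩

theorem exists_common_neighbours (hk : 2 ≤ k) (hZ : IsMinimalCycle k Z) (hZ' : IsModTwoCycle k Z')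
    (hsub : Z' ⊆ pushforward k (contraction u v) Z) (huv : u ≠ v) (hσ : σ ∈ Z) (huσ : u ∈ σ)
    (hvσ : v ∈ σ) (hτ : τ ∈ liftedChain u v Z Z') :
    ∃ C : Finset V, C.card = k ∧ u ∉ C ∧ v ∉ C ∧
      (∀ c ∈ C, ∃ σ ∈ liftedChain u v Z Z', u ∈ σ ∧ c ∈ σ) ∧
      ∀ c ∈ C, ∃ σ ∈ liftedChain u v Z Z', v ∈ σ ∧ c ∈ σ := by
  obtain ⟨π, hπ, huπ, hvπ, hodd_u, hodd_v⟩ :=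
    exists_odd_card_cofaces_liftedChain hZ hZ' hsub huv hσ huσ hvσ hτ
  have hcard := fun σ hσ => hZ.prop.1.1 σ (liftedChain_subset (u := u) (v := v) (Z' := Z') hσ)
  obtain ⟨b, hb⟩ : π.Nonempty := card_pos.mp (by lia)
  have huπb : u ∉ π.erase b := fun h => huπ (mem_of_mem_erase h)
  -- Pivoting `b` to `c` in the odd ridge `insert u π` keeps it odd, so both `π` and its pivot
  -- consist of common neighbours.
  obtain ⟨c, hcπ, hcb, hodd⟩ := exists_odd_card_cofaces_insert (a := b) (π := insert u (π.erase b))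
    hcard (by rw [card_insert_of_notMem huπb, card_erase_add_one hb, hπ])
    (by simp [(ne_of_mem_of_not_mem hb huπ)])
    (by rwa [insert_comm, insert_erase hb])
  rw [mem_insert, not_or] at hcπ
  rw [insert_comm] at hodd
  have hcv : c ≠ v := by
    rintro rfl
    obtain ⟨υ, hυ, huυ, hcυ⟩ := exists_mem_of_odd_card_cofaces hodd (mem_insert_self c _)
    exact not_mem_and_mem_of_mem_liftedChain hZ.prop.1.1 hZ'.1 huv hυ ⟨huυ, hcυ⟩
  have hodd' := (odd_card_cofaces_liftedChain_iff hZ.prop.1.1 hZ' hsub huv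
    (by rw [card_insert_of_notMem hcπ.2, card_erase_add_one hb, hπ])
    (by simp [Ne.symm hcπ.1, huπ]) (by simp [hcv.symm, hvπ])).mp hodd
  have hc : c ∉ π := fun h => hcπ.2 (mem_erase.mpr ⟨hcb, h⟩)
  refine ⟨insert c π, by rw [card_insert_of_notMem hc, hπ], by simp [Ne.symm hcπ.1, huπ],
    by simp [hcv.symm, hvπ], fun a ha => ?_, fun a ha => ?_⟩
  all_goals rcases mem_insert.mp ha with rfl | ha
  · exact exists_mem_of_odd_card_cofaces hodd (mem_insert_self _ _)
  · exact exists_mem_of_odd_card_cofaces hodd_u ha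
  · exact exists_mem_of_odd_card_cofaces hodd' (mem_insert_self _ _)
  · exact exists_mem_of_odd_card_cofaces hodd_v ha

end Contraction

/-! ### Cones over minimal cycles are rigid -/

section Cone

variable {V K ι : Type*} [DecidableEq V] [Field K] [Fintype ι] {k : ℕ}
  {Z Z' : Finset (Finset V)} {σ τ : Finset V} {u v t : V} {p x : V → ι → K}

theorem exists_mem_image_insert (h : ∃ σ ∈ Z, u ∈ σ ∧ v ∈ σ) :
    ∃ σ ∈ Z.image (insert t), u ∈ σ ∧ v ∈ σ := by
  obtain ⟨σ, hσ, huσ, hvσ⟩ := h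
  exact ⟨insert t σ, mem_image_of_mem _ hσ, mem_insert_of_mem huσ, mem_insert_of_mem hvσ⟩

theorem image_contraction_subset_sup (hu : u ∈ Z.sup id) (hσ : σ ∈ Z) :
    σ.image (contraction u v) ⊆ Z.sup id := by
  refine image_subset_iff.mpr fun w hw => ?_
  rcases eq_or_ne w v with rfl | hwv
  · rwa [contraction_self]
  · rw [contraction_of_ne u hwv]
    exact mem_sup.mpr ⟨σ, hσ, hw⟩

theorem InGeneralPosition.linearIndepOn_comp_contraction {S : Finset V}
    (hp : InGeneralPosition p S) (hσ : ¬(u ∈ σ ∧ v ∈ σ)) (hσS : σ.image (contraction u v) ⊆ S)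
    (hcard : σ.card ≤ Fintype.card ι) : LinearIndepOn K (p ∘ contraction u v) σ :=
  .comp_of_image (coe_image (f := contraction u v) ▸ hp _ hσS (card_image_le.trans hcard))
    (contraction_injOn hσ)

theorem insert_subset_sup_of_forall_exists {L : Finset (Finset V)} {C : Finset V} (hC : C.Nonempty)
    (h : ∀ c ∈ C, ∃ σ ∈ L, u ∈ σ ∧ c ∈ σ) : insert u C ⊆ L.sup id := by
  have hsup : ∀ c ∈ C, u ∈ L.sup id ∧ c ∈ L.sup id := fun c hc => by
    obtain ⟨σ, hσ, huσ, hcσ⟩ := h c hc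
    exact ⟨mem_sup.mpr ⟨σ, hσ, huσ⟩, mem_sup.mpr ⟨σ, hσ, hcσ⟩⟩
  obtain ⟨c, hc⟩ := hC
  exact insert_subset (hsup c hc).1 fun w hw => (hsup w hw).2

theorem IsRigidOn.cone_liftedChain (hι : Fintype.card ι = k + 2)
    (hrigid : IsRigidOn (Z'.image (insert t)) (insert t (Z'.sup id)) p)
    (hp : InGeneralPosition p (insert t (Z.sup id))) (ht : t ∉ Z.sup id)
    (hsub : Z' ⊆ Z.image (image (contraction u v))) (hvt : v ≠ t) {C : Finset V}
    (hCcard : C.card = k) (hC : C.Nonempty) (huC : u ∉ C) (hvC : v ∉ C)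
    (hCu : ∀ c ∈ C, ∃ σ ∈ liftedChain u v Z Z', u ∈ σ ∧ c ∈ σ)
    (hCv : ∀ c ∈ C, ∃ σ ∈ liftedChain u v Z Z', v ∈ σ ∧ c ∈ σ) :
    IsRigidOn (insert {u, v} ((liftedChain u v Z Z').image (insert t)))
      (insert t ((liftedChain u v Z Z').sup id)) (p ∘ contraction u v) := by
  have hCsup : insert u C ⊆ Z.sup id :=
    (insert_subset_sup_of_forall_exists hC hCu).trans (sup_mono liftedChain_subset)
  have hcontr : ∀ σ : Finset V, (insert t σ).image (contraction u v) =
      insert t (σ.image (contraction u v)) := fun σ => by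
    rw [image_insert, contraction_of_ne u hvt.symm]
  have htC : t ∉ insert u C := fun h => ht (hCsup h)
  obtain ⟨c₀, hc₀⟩ := hC
  have hapex : ∀ a w, (∃ σ ∈ liftedChain u v Z Z', a ∈ σ ∧ w ∈ σ) →
      ∃ σ ∈ (liftedChain u v Z Z').image (insert t), a ∈ σ ∧ t ∈ σ := by
    rintro a w ⟨σ, hσ, haσ, -⟩
    exact ⟨insert t σ, mem_image_of_mem _ hσ, mem_insert_of_mem haσ, mem_insert_self _ _⟩
  refine IsRigidOn.vertex_split (C := insert t C) (hrigid.mono ?_ subset_rfl) ?_ ?_ ?_ ?_ ?_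
  · simp only [forall_mem_image]
    intro σ' hσ'
    obtain ⟨σ, hσ, rfl⟩ := mem_image.mp (hsub hσ')
    exact ⟨_, mem_image_of_mem _ (mem_image_of_mem _ (mem_filter.mpr ⟨hσ, hσ'⟩)), (hcontr σ).ge⟩
  · rw [hcontr]
    refine insert_subset_insert t (image_subset_iff.mpr fun w hw => ?_)
    obtain ⟨σ, hσ, hwσ⟩ := mem_sup.mp hw
    exact mem_sup.mpr ⟨_, (mem_filter.mp hσ).2, mem_image_of_mem _ hwσ⟩
  · exact forall_mem_insert .. |>.mpr ⟨hapex u c₀ (hCu c₀ hc₀),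
      fun c hc => exists_mem_image_insert (hCu c hc)⟩
  · exact forall_mem_insert .. |>.mpr ⟨hapex v c₀ (hCv c₀ hc₀),
      fun c hc => exists_mem_image_insert (hCv c hc)⟩
  · exact mt mem_insert.mp (not_or.mpr ⟨hvt, hvC⟩)
  · rw [insert_comm]
    refine hp.span_eq_top (insert_subset_insert t hCsup) (le_of_eq ?_)
    rw [card_insert_of_notMem htC, card_insert_of_notMem huC, hCcard, hι]

theorem eventually_isRigidOn_of_mem_liftedChain [Infinite K] (hι : Fintype.card ι = k + 2)
    (hk : 2 ≤ k) (hZ : IsMinimalCycle k Z) (ht : t ∉ Z.sup id) (hZ' : IsModTwoCycle k Z')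
    (hsub : Z' ⊆ pushforward k (contraction u v) Z) (huv : u ≠ v) (hσ : σ ∈ Z) (huσ : u ∈ σ)
    (hvσ : v ∈ σ) (hτ : τ ∈ liftedChain u v Z Z')
    (hrigid : ∀ᶠ p in genericFilter V K ι,
      IsRigidOn (Z'.image (insert t)) (insert t (Z'.sup id)) p) :
    ∀ᶠ p in genericFilter V K ι, IsRigidOn (Z.image (insert t)) ({u, v, t} ∪ τ) p := by
  obtain ⟨C, hC, huC, hvC, hCu, hCv⟩ := exists_common_neighbours hk hZ hZ' hsub huv hσ huσ hvσ hτ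
  have hCne : C.Nonempty := card_pos.mp (by lia)
  have hu : u ∈ Z.sup id := mem_sup.mpr ⟨σ, hσ, huσ⟩
  have hvt : v ≠ t := ne_of_mem_of_not_mem (mem_sup.mpr ⟨σ, hσ, hvσ⟩) ht
  have hτZ : τ ∈ Z := liftedChain_subset hτ
  have htτ : t ∉ τ := fun h => ht (mem_sup.mpr ⟨τ, hτZ, h⟩)
  have hcard : (insert t τ).card = Fintype.card ι := by
    rw [card_insert_of_notMem htτ, hZ.prop.1.1 τ hτZ, hι]
  have huchain := insert_subset_sup_of_forall_exists hCne hCu (mem_insert_self u C)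
  have hvchain := insert_subset_sup_of_forall_exists hCne hCv (mem_insert_self v C)
  obtain ⟨q, hqrigid, hq⟩ :=
    (hrigid.and (eventually_inGeneralPosition (insert t (Z.sup id)))).exists
  have hsplit := hqrigid.cone_liftedChain hι hq ht (hsub.trans (filter_subset _ _)) hvt hC hCne huC
    hvC hCu hCv
  have hindep : LinearIndepOn K (q ∘ contraction u v) (insert t τ : Finset V) := by
    refine hq.linearIndepOn_comp_contraction (fun h => ?_) ?_ hcard.le
    · have huτ := mem_of_mem_insert_of_ne h.1 (ne_of_mem_of_not_mem hu ht)
      have hvτ := mem_of_mem_insert_of_ne h.2 hvt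
      exact not_mem_and_mem_of_mem_liftedChain hZ.prop.1.1 hZ'.1 huv hτ ⟨huτ, hvτ⟩
    · rw [image_insert, contraction_of_ne u hvt.symm]
      exact insert_subset_insert t (image_contraction_subset_sup hu hτZ)
  have hfaces : ∀ υ ∈ insert {u, v} ((liftedChain u v Z Z').image (insert t)),
      υ ⊆ insert t ((liftedChain u v Z Z').sup id) := by
    rw [forall_mem_insert, forall_mem_image]
    exact ⟨(insert_subset huchain (singleton_subset_iff.mpr hvchain)).trans (subset_insert _ _),
      fun υ hυ => insert_subset_insert t (le_sup (f := id) hυ)⟩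
  filter_upwards [eventually_isRigidOn hfaces
    (mem_insert_of_mem (mem_image_of_mem _ hτ)) hcard hindep hsplit] with p hp
  refine hp.mono ?_ ?_
  · rw [forall_mem_insert, forall_mem_image]
    refine ⟨⟨insert t σ, mem_image_of_mem _ hσ, ?_⟩, fun υ hυ =>
      ⟨insert t υ, mem_image_of_mem _ (liftedChain_subset hυ), subset_rfl⟩⟩
    exact insert_subset (mem_insert_of_mem huσ) (singleton_subset_iff.mpr (mem_insert_of_mem hvσ))
  · refine union_subset ?_ ((le_sup (f := id) hτ).trans (subset_insert _ _))
    exact insert_subset (mem_insert_of_mem huchain)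
      (insert_subset (mem_insert_of_mem hvchain) (singleton_subset_iff.mpr (mem_insert_self t _)))

theorem sup_subset_erase_of_subset_pushforward (huv : u ≠ v) (hu : u ∈ Z.sup id)
    (hsub : Z' ⊆ pushforward k (contraction u v) Z) : Z'.sup id ⊆ (Z.sup id).erase v := by
  intro w hw
  obtain ⟨σ', hσ', hwσ'⟩ := mem_sup.mp hw
  obtain ⟨σ, hσ, rfl⟩ := mem_image.mp (mem_filter.mp (hsub hσ')).1
  refine mem_erase.mpr ⟨?_, image_contraction_subset_sup hu hσ hwσ'⟩
  rcases mem_image_contraction.mp hwσ' with h | h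
  exacts [h.1, h.1 ▸ huv]

theorem exists_insert_erase_subset_of_image_notMem_pushforward (hZ : ∀ σ ∈ Z, σ.card = k + 1)
    (huv : u ≠ v) (hτ : τ ∈ Z) (h : τ.image (contraction u v) ∉ pushforward k (contraction u v) Z) :
    (∃ υ ∈ Z, insert u (τ.erase v) ⊆ υ) ∧ ∃ υ ∈ Z, insert v (τ.erase u) ⊆ υ := by
  by_cases hboth : u ∈ τ ∧ v ∈ τ
  · exact ⟨⟨τ, hτ, insert_subset hboth.1 (erase_subset v τ)⟩,
      ⟨τ, hτ, insert_subset hboth.2 (erase_subset u τ)⟩⟩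
  have hcard : (τ.image (contraction u v)).card = k + 1 :=
    (card_image_of_injOn (contraction_injOn hboth)).trans (hZ τ hτ)
  let fibre := Z.filter fun σ => σ.image (contraction u v) = τ.image (contraction u v)
  have hτfibre : τ ∈ fibre := mem_filter.mpr ⟨hτ, rfl⟩
  have heven : Even fibre.card := Nat.not_odd_iff_even.mp fun hodd =>
    h (mem_filter.mpr ⟨mem_image_of_mem _ hτ, hcard, hodd⟩)
  have hone : 1 < fibre.card :=
    lt_of_le_of_ne (card_pos.mpr ⟨τ, hτfibre⟩) fun h => by simp [← h] at heven
  obtain ⟨υ, hυ, hυτ⟩ := exists_mem_ne hone τ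
  obtain ⟨hυ, himage⟩ := mem_filter.mp hυ
  have hboth' : ¬(u ∈ υ ∧ v ∈ υ) := fun h => by
    have := card_image_contraction_lt huv h.1 h.2
    rw [himage, hcard, hZ υ hυ] at this
    exact this.false
  have hmem : ∀ w, (w ≠ v ∧ w ∈ υ ∨ w = u ∧ v ∈ υ) ↔ (w ≠ v ∧ w ∈ τ ∨ w = u ∧ v ∈ τ) :=
    fun w => by rw [← mem_image_contraction, himage, mem_image_contraction]
  have hor : insert u (τ.erase v) ⊆ υ ∧ v ∈ τ ∨ insert v (τ.erase u) ⊆ υ ∧ u ∈ τ := by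
    grind
  rcases hor with ⟨hυ', hvτ⟩ | ⟨hυ', huτ⟩
  · exact ⟨⟨υ, hυ, hυ'⟩, τ, hτ, insert_subset hvτ (erase_subset u τ)⟩
  · exact ⟨⟨τ, hτ, insert_subset huτ (erase_subset v τ)⟩, υ, hυ, hυ'⟩

theorem isRigidOn_cone_of_image_notMem_pushforward (hι : Fintype.card ι = k + 2)
    (hZ : ∀ σ ∈ Z, σ.card = k + 1) (hp : InGeneralPosition p (insert t (Z.sup id)))
    (ht : t ∉ Z.sup id) (huv : u ≠ v) (hσ : σ ∈ Z) (huσ : u ∈ σ) (hvσ : v ∈ σ) (hτ : τ ∈ Z)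
    (h : τ.image (contraction u v) ∉ pushforward k (contraction u v) Z) :
    IsRigidOn (Z.image (insert t)) ({u, v, t} ∪ τ) p := by
  have hu : u ∈ Z.sup id := mem_sup.mpr ⟨σ, hσ, huσ⟩
  have hv : v ∈ Z.sup id := mem_sup.mpr ⟨σ, hσ, hvσ⟩
  have htτ : t ∉ τ := fun h => ht (mem_sup.mpr ⟨τ, hτ, h⟩)
  have hpiece : {u, v, t} ∪ τ ⊆ insert t (Z.sup id) :=
    union_subset (by grind)
      ((le_sup (f := id) hτ).trans (subset_insert _ _))
  have hspan : Submodule.span K (p '' ({u, v, t} ∪ τ : Finset V)) = ⊤ := by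
    refine hp.span_eq_top hpiece ?_
    calc Fintype.card ι = (insert t τ).card := by rw [card_insert_of_notMem htτ, hZ τ hτ, hι]
      _ ≤ _ := card_le_card (insert_subset (by simp) subset_union_right)
  obtain ⟨⟨υ, hυ, hυsub⟩, ω, hω, hωsub⟩ :=
    exists_insert_erase_subset_of_image_notMem_pushforward hZ huv hτ h
  refine isRigidOn_of_clique hspan fun i hi j hj hij => ?_
  have hσ' := mem_image_of_mem (insert t) hσ
  have hτ' := mem_image_of_mem (insert t) hτ
  have hυ' := mem_image_of_mem (insert t) hυ
  have hω' := mem_image_of_mem (insert t) hω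
  grind

theorem IsMinimalCycle.isRigidOn_cone_of_pieces (hι : Fintype.card ι = k + 2)
    (hZ : IsMinimalCycle k Z) (hp : InGeneralPosition p (insert t (Z.sup id)))
    (ht : t ∉ Z.sup id) (hv : v ∈ Z.sup id)
    (hpieces : ∀ τ ∈ Z, IsRigidOn (Z.image (insert t)) ({u, v, t} ∪ τ) p) :
    IsRigidOn (Z.image (insert t)) (insert t (Z.sup id)) p := by
  classical
  intro x hx
  choose! A hAsymm hA using fun τ hτ => hpieces τ hτ x hx
  obtain ⟨σ, hσ⟩ := hZ.prop.2
  have hW : Z.filter (fun τ => A τ = A σ) = Z := by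
    refine hZ.eq_of_forall_ridge (filter_subset _ _) ⟨σ, mem_filter.mpr ⟨hσ, rfl⟩⟩ v
      fun ρ hρ hvρ τ hτ υ hυ => ?_
    obtain ⟨⟨hτ, hAτ⟩, hρτ⟩ := (mem_cofaces.trans (and_congr_left' mem_filter)).mp hτ
    obtain ⟨hυ, hρυ⟩ := mem_cofaces.mp hυ
    have hρZ : ρ ⊆ Z.sup id := hρτ.trans (le_sup (f := id) hτ)
    have hpiece : ∀ ω, ρ ⊆ ω → insert t (insert v ρ) ⊆ {u, v, t} ∪ ω := fun ω hρω =>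
      insert_subset (by simp) (insert_subset (by simp) (hρω.trans subset_union_right))
    have hspan : Submodule.span K (p '' (insert t (insert v ρ) : Finset V)) = ⊤ := by
      refine hp.span_eq_top (insert_subset_insert t (insert_subset hv hρZ)) (le_of_eq ?_)
      rw [card_insert_of_notMem fun h => ht (insert_subset hv hρZ h), card_insert_of_notMem hvρ,
        hρ, hι]
    refine mem_filter.mpr ⟨hυ, hAτ ▸ matrix_eq_of_eqOn hspan fun w hw => ?_⟩
    exact (hA υ hυ (hpiece υ hρυ hw)).symm.trans (hA τ hτ (hpiece τ hρτ hw))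
  have hmem : ∀ τ ∈ Z, ∀ w ∈ insert t τ, x w = A σ *ᵥ p w := fun τ hτ w hw => by
    rw [← hW] at hτ
    obtain ⟨hτ, hAτ⟩ := mem_filter.mp hτ
    rw [← hAτ]
    exact hA τ hτ (insert_subset (by simp) subset_union_right hw)
  refine ⟨A σ, hAsymm σ hσ, fun w hw => ?_⟩
  rcases mem_insert.mp hw with rfl | hw
  · exact hmem σ hσ w (mem_insert_self w σ)
  · obtain ⟨τ, hτ, hwτ⟩ := mem_sup.mp hw
    exact hmem τ hτ w (mem_insert_of_mem hwτ)

theorem IsMinimalCycle.eventually_isRigidOn_cone [Infinite K] (hι : Fintype.card ι = k + 2)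
    (hk : 2 ≤ k) (hZ : IsMinimalCycle k Z) (ht : t ∉ Z.sup id) :
    ∀ᶠ p in genericFilter V K ι, IsRigidOn (Z.image (insert t)) (insert t (Z.sup id)) p := by
  induction hn : (Z.sup id).card using Nat.strong_induction_on generalizing Z with
  | _ n ih =>
  obtain ⟨σ, hσ⟩ := hZ.prop.2
  obtain ⟨u, huσ, v, hvσ, huv⟩ : ∃ u ∈ σ, ∃ v ∈ σ, u ≠ v :=
    one_lt_card.mp (by rw [hZ.prop.1.1 σ hσ]; lia)
  have hu : u ∈ Z.sup id := mem_sup.mpr ⟨σ, hσ, huσ⟩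
  have hv : v ∈ Z.sup id := mem_sup.mpr ⟨σ, hσ, hvσ⟩
  have hgen := eventually_inGeneralPosition (K := K) (ι := ι) (insert t (Z.sup id))
  have hpieces : ∀ τ ∈ Z, ∀ᶠ p in genericFilter V K ι,
      IsRigidOn (Z.image (insert t)) ({u, v, t} ∪ τ) p := by
    intro τ hτ
    by_cases hpush : τ.image (contraction u v) ∈ pushforward k (contraction u v) Z
    · obtain ⟨Z', hsub, hZ', hτZ'⟩ :=
        (hZ.prop.1.pushforward (contraction u v)).exists_isMinimalCycle hpush
      have hsup : Z'.sup id ⊆ (Z.sup id).erase v :=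
        sup_subset_erase_of_subset_pushforward huv hu hsub
      refine eventually_isRigidOn_of_mem_liftedChain hι hk hZ ht hZ'.prop.1 hsub huv hσ huσ hvσ
        (mem_filter.mpr ⟨hτ, hτZ'⟩) (ih _ ?_ hZ' (fun h => ht (mem_of_mem_erase (hsup h))) rfl)
      exact hn ▸ (card_le_card hsup).trans_lt (card_erase_lt_of_mem hv)
    · filter_upwards [hgen] with p hp
      exact isRigidOn_cone_of_image_notMem_pushforward hι hZ.prop.1.1 hp ht huv hσ huσ hvσ hτ hpush
  filter_upwards [hgen, (Filter.eventually_all_finset Z).mpr hpieces] with p hp hpieces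
  exact hZ.isRigidOn_cone_of_pieces hι hp ht hv hpieces

end Cone

/-! ### Cycles in graphs -/

section Graph

variable {V : Type*} [DecidableEq V] {E : Finset (Finset V)} {e : Finset V} {u v w : V}

theorem eq_pair_of_mem (he : e.card = 2) (hv : v ∈ e) (hw : w ∈ e) (hvw : v ≠ w) : e = {v, w} :=
  (eq_of_subset_of_card_le (insert_subset hv (singleton_subset_iff.mpr hw))
    (by rw [he, card_pair hvw])).symm

open Classical in
theorem IsModTwoCycle.exists_pair_mem_of_odd (hE : IsModTwoCycle 1 E) {S : Set V} (hu : u ∉ S)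
    (hS : ∀ a ∈ S, ∀ b, {a, b} ∈ E → b = u ∨ b = v ∨ b ∈ S)
    (hodd : Odd (cofaces (E.filter fun e => ∃ a ∈ e, a ∈ S) {v}).card) : ∃ a ∈ S, {a, u} ∈ E := by
  rw [← insert_empty_eq] at hodd
  obtain ⟨b, -, hbv, hodd⟩ := exists_odd_card_cofaces_insert
    (fun e he => hE.1 e (mem_filter.mp he).1) rfl (notMem_empty v) hodd
  rw [insert_empty_eq] at hodd
  obtain ⟨e, he⟩ := card_pos.mp hodd.pos
  obtain ⟨he, hbe⟩ := mem_cofaces.mp he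
  obtain ⟨he, a, hae, ha⟩ := mem_filter.mp he
  rw [singleton_subset_iff] at hbe
  rcases eq_or_ne b u with rfl | hbu
  · have hab : a ≠ b := fun h => hu (h ▸ ha)
    exact ⟨a, ha, eq_pair_of_mem (hE.1 e he) hae hbe hab ▸ he⟩
  · have hb : b ∈ S := by
      rcases eq_or_ne a b with rfl | hab
      · exact ha
      · rw [eq_pair_of_mem (hE.1 e he) hae hbe hab] at he
        exact ((hS a ha b he).resolve_left hbu).resolve_left hbv
    have hfull : cofaces (E.filter fun e => ∃ a ∈ e, a ∈ S) {b} = cofaces E {b} := by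
      refine (filter_subset_filter _ (filter_subset _ _)).antisymm fun e he => ?_
      obtain ⟨he, hbe⟩ := mem_cofaces.mp he
      exact mem_cofaces.mpr ⟨mem_filter.mpr ⟨he, b, singleton_subset_iff.mp hbe, hb⟩, hbe⟩
    exact absurd (hE.2 {b} (card_singleton b)) (Nat.not_even_iff_odd.mpr (hfull ▸ hodd))

theorem IsModTwoCycle.exists_path_avoiding (hE : IsModTwoCycle 1 E) (huv : {u, v} ∈ E)
    (hv : (cofaces E {v}).card = 2) :
    ∃ w w', w ∉ ({u, v} : Finset V) ∧ {v, w} ∈ E ∧ {w', u} ∈ E ∧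
      Relation.ReflTransGen (fun a b => {a, b} ∈ E ∧ b ∉ ({u, v} : Finset V)) w w' := by
  classical
  obtain ⟨e, he, hne⟩ := exists_mem_ne (hv.symm ▸ one_lt_two) ({u, v} : Finset V)
  have hpair : cofaces E {v} = {{u, v}, e} :=
    eq_pair_of_mem hv (mem_cofaces.mpr ⟨huv, by simp⟩) he hne.symm
  obtain ⟨heE, hve⟩ := mem_cofaces.mp he
  rw [singleton_subset_iff] at hve
  obtain ⟨w, hwe, hwv⟩ := exists_mem_ne (one_lt_two.trans_eq (hE.1 e heE).symm) v
  obtain rfl := eq_pair_of_mem (hE.1 e heE) hve hwe hwv.symm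
  have hw : w ∉ ({u, v} : Finset V) := by
    rw [mem_insert, mem_singleton, not_or]
    exact ⟨fun h => hne (by rw [h, pair_comm]), hwv⟩
  set S : Set V :=
    {c | Relation.ReflTransGen (fun a b => {a, b} ∈ E ∧ b ∉ ({u, v} : Finset V)) w c}
  have havoid : ∀ c ∈ S, c ∉ ({u, v} : Finset V) := fun c hc =>
    hc.cases_tail.elim (· ▸ hw) fun ⟨_, _, h⟩ => h.2
  have hone : cofaces (E.filter fun e => ∃ a ∈ e, a ∈ S) {v} = {{v, w}} := by
    refine eq_singleton_iff_unique_mem.mpr ⟨?_, fun e he => ?_⟩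
    · exact mem_cofaces.mpr ⟨mem_filter.mpr ⟨heE, w, hwe, .refl⟩, singleton_subset_iff.mpr hve⟩
    · obtain ⟨he, hve⟩ := mem_cofaces.mp he
      obtain ⟨he, c, hce, hc⟩ := mem_filter.mp he
      have hmem : e ∈ cofaces E {v} := mem_cofaces.mpr ⟨he, hve⟩
      rw [hpair, mem_insert, mem_singleton] at hmem
      exact hmem.resolve_left fun h => havoid c hc (h ▸ hce)
  have hclosed : ∀ a ∈ S, ∀ b, {a, b} ∈ E → b = u ∨ b = v ∨ b ∈ S := by
    intro a ha b hab
    by_cases hb : b ∈ ({u, v} : Finset V)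
    · rw [mem_insert, mem_singleton] at hb
      tauto
    · exact Or.inr (Or.inr (ha.tail ⟨hab, hb⟩))
  obtain ⟨w', hw', hw'u⟩ := hE.exists_pair_mem_of_odd (fun h => havoid u h (by simp)) hclosed
    (hone ▸ odd_one)
  exact ⟨w, w', hw, heE, hw'u, hw'⟩

end Graph

end Hyperconnectivity

namespace SComplex

open Hyperconnectivity

section Normal

variable {V : Type} [DecidableEq V] {Δ : SComplex V} {d k : ℕ} {ρ σ τ : Finset V} {t u v w : V}

theorem mem_vertices : v ∈ Δ.vertices ↔ ∃ σ ∈ Δ.faces, v ∈ σ :=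
  mem_sup

theorem subset_vertices (hσ : σ ∈ Δ.faces) : σ ⊆ Δ.vertices :=
  le_sup (f := id) hσ

theorem singleton_mem_faces_iff : {v} ∈ Δ.faces ↔ v ∈ Δ.vertices := by
  refine ⟨fun hv => subset_vertices hv (mem_singleton_self v), fun hv => ?_⟩
  obtain ⟨σ, hσ, hvσ⟩ := mem_vertices.mp hv
  exact Δ.down_closed σ hσ _ (singleton_subset_iff.mpr hvσ) (singleton_nonempty v)

theorem pair_mem_faces (hσ : σ ∈ Δ.faces) (hu : u ∈ σ) (hv : v ∈ σ) : {u, v} ∈ Δ.faces :=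
  Δ.down_closed σ hσ _ (insert_subset hu (singleton_subset_iff.mpr hv)) (insert_nonempty u _)

/-- The faces of dimension `d`, as a simplicial chain mod 2. -/
def chain (Δ : SComplex V) (d : ℕ) : Finset (Finset V) :=
  Δ.faces.filter fun σ => σ.card = d + 1

theorem mem_chain : σ ∈ Δ.chain d ↔ σ ∈ Δ.faces ∧ σ.card = d + 1 :=
  mem_filter

/-! ### Links and stars in normal pseudomanifolds -/

/-- Adjacency of `d`-dimensional facets across a ridge that contains `ρ`. -/
def AdjacentOver (Δ : SComplex V) (d : ℕ) (ρ σ τ : Finset V) : Prop :=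
  τ ∈ Δ.chain d ∧ (σ ∩ τ).card = d ∧ ρ ⊆ σ ∩ τ

theorem reflTransGen_adjacentOver_of_connected_link (hΔ : Δ.Pure d) (hlink : (Δ.link ρ).Connected)
    (hinsert : ∀ a ∉ ρ, ∀ σ ∈ Δ.chain d, ∀ τ ∈ Δ.chain d, insert a ρ ⊆ σ → insert a ρ ⊆ τ →
      Relation.ReflTransGen (Δ.AdjacentOver d ρ) σ τ)
    (hσ : σ ∈ Δ.chain d) (hρσ : ρ ⊂ σ) (hτ : τ ∈ Δ.chain d) (hρτ : ρ ⊂ τ) :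
    Relation.ReflTransGen (Δ.AdjacentOver d ρ) σ τ := by
  have hvertex : ∀ {υ}, υ ∈ Δ.chain d → ∀ {a}, insert a ρ ⊆ υ → a ∉ ρ →
      a ∈ (Δ.link ρ).vertices := by
    intro υ hυ a ha haρ
    have hυ := (mem_chain.mp hυ).1
    refine singleton_mem_faces_iff.mp (mem_filter.mpr ⟨?_, ?_, ?_⟩)
    · exact singleton_mem_faces_iff.mpr (subset_vertices hυ (ha (mem_insert_self a ρ)))
    · rwa [inter_singleton_of_notMem]
    · rw [union_comm]
      exact Δ.down_closed υ hυ _ ha (insert_nonempty a ρ)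
  obtain ⟨a, haρ, haσ⟩ := ssubset_iff.mp hρσ
  obtain ⟨b, hbρ, hbτ⟩ := ssubset_iff.mp hρτ
  have hpath := hlink a (hvertex hσ haσ haρ) b (hvertex hτ hbτ hbρ)
  clear hρτ
  induction hpath generalizing τ with
  | refl => exact hinsert a haρ σ hσ τ hτ haσ hbτ
  | @tail c b _ hcb ih =>
    obtain ⟨-, hdisj, hface⟩ := mem_filter.mp hcb
    obtain ⟨υ, hυ, hsub, hcard⟩ := hΔ _ hface
    have hυ := mem_chain.mpr ⟨hυ, hcard⟩
    have hcρ : c ∉ ρ := fun hc => notMem_empty c (hdisj ▸ mem_inter.mpr ⟨hc, mem_insert_self c {b}⟩)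
    have hcυ : insert c ρ ⊆ υ :=
      insert_subset (hsub (by simp)) (subset_union_left.trans hsub)
    have hbυ : insert b ρ ⊆ υ :=
      insert_subset (hsub (by simp)) (subset_union_left.trans hsub)
    exact (ih hυ hcρ hcυ).trans (hinsert b hbρ υ hυ τ hτ hbυ hbτ)

theorem IsNormal.reflTransGen_adjacentOver (hΔ : Δ.IsNormal d) (hρ : ρ.Nonempty)
    (hσ : σ ∈ Δ.chain d) (hρσ : ρ ⊆ σ) (hτ : τ ∈ Δ.chain d) (hρτ : ρ ⊆ τ) :
    Relation.ReflTransGen (Δ.AdjacentOver d ρ) σ τ := by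
  induction hn : d + 1 - ρ.card generalizing ρ σ τ with
  | zero =>
    have hcard : d + 1 ≤ ρ.card := by lia
    rw [← eq_of_subset_of_card_le hρσ ((mem_chain.mp hσ).2.trans_le hcard),
      ← eq_of_subset_of_card_le hρτ ((mem_chain.mp hτ).2.trans_le hcard)]
  | succ n ih =>
    have hσcard := (mem_chain.mp hσ).2
    have hτcard := (mem_chain.mp hτ).2
    rcases n.eq_zero_or_pos with rfl | hpos
    · have hρcard : ρ.card = d := by lia
      rcases eq_or_ne σ τ with rfl | hστ
      · rfl
      refine .single ⟨hτ, (card_le_card (subset_inter hρσ hρτ)).antisymm' ?_ |>.trans hρcard,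
        subset_inter hρσ hρτ⟩
      have hlt : (σ ∩ τ).card < σ.card := card_lt_card <| inter_subset_left.ssubset_of_ne fun h =>
        hστ (eq_of_subset_of_card_le (inter_eq_left.mp h) (hτcard.trans_le hσcard.ge))
      lia
    · refine reflTransGen_adjacentOver_of_connected_link hΔ.1.1
        (hΔ.2 ρ (Δ.down_closed σ (mem_chain.mp hσ).1 ρ hρσ hρ) (by lia)) ?_ hσ
        (hρσ.ssubset_of_ne fun h => by subst h; lia) hτ
        (hρτ.ssubset_of_ne fun h => by subst h; lia)
      intro a ha σ hσ τ hτ haσ haτ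
      have hcard := card_insert_of_notMem ha
      exact (ih (insert_nonempty a ρ) hσ haσ hτ haτ (by lia)).lift id
        fun _ _ h => ⟨h.1, h.2.1, (subset_insert a ρ).trans h.2.2⟩

theorem mem_chain_link_singleton :
    σ ∈ (Δ.link {w}).chain k ↔ w ∉ σ ∧ σ.card = k + 1 ∧ insert w σ ∈ Δ.faces := by
  rw [mem_chain, link, mem_filter, ← disjoint_iff_inter_eq_empty, disjoint_singleton_left,
    singleton_union]
  constructor
  · tauto
  · rintro ⟨hw, hcard, hσ⟩
    refine ⟨⟨Δ.down_closed _ hσ σ (subset_insert w σ) (card_pos.mp (by lia)), hw, hσ⟩, hcard⟩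

theorem erase_mem_chain_link (hτ : τ ∈ Δ.chain (k + 1)) (hw : w ∈ τ) :
    τ.erase w ∈ (Δ.link {w}).chain k := by
  obtain ⟨hτ, hcard⟩ := mem_chain.mp hτ
  rw [mem_chain_link_singleton, insert_erase hw, card_erase_of_mem hw, hcard]
  exact ⟨notMem_erase w τ, rfl, hτ⟩

theorem IsPseudomanifold.card_cofaces_chain_link (hΔ : Δ.IsPseudomanifold (k + 1))
    (hρ : ρ.card = k) (hw : w ∉ ρ) (hface : insert w ρ ∈ Δ.faces) :
    (cofaces ((Δ.link {w}).chain k) ρ).card = 2 := by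
  rw [← hΔ.2.1 _ hface (by rw [card_insert_of_notMem hw, hρ])]
  refine card_nbij' (insert w) (erase · w) ?_ ?_ ?_ ?_
  · intro σ hσ
    obtain ⟨hσ, hρσ⟩ := mem_cofaces.mp hσ
    obtain ⟨hwσ, hcard, hσ⟩ := mem_chain_link_singleton.mp hσ
    exact mem_filter.mpr ⟨hσ, insert_subset_insert w hρσ, by rw [card_insert_of_notMem hwσ, hcard]⟩
  · intro τ hτ
    obtain ⟨hτ, hsub, hcard⟩ := mem_filter.mp hτ
    exact mem_cofaces.mpr ⟨erase_mem_chain_link (mem_chain.mpr ⟨hτ, hcard⟩)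
      (hsub (mem_insert_self w ρ)), (subset_erase.mpr ⟨(subset_insert w ρ).trans hsub, hw⟩)⟩
  · intro σ hσ
    exact erase_insert (mem_chain_link_singleton.mp (mem_cofaces.mp hσ).1).1
  · intro τ hτ
    exact insert_erase ((mem_filter.mp hτ).2.1 (mem_insert_self w ρ))

theorem IsPseudomanifold.isModTwoCycle_chain_link (hΔ : Δ.IsPseudomanifold (k + 1)) (w : V) :
    IsModTwoCycle k ((Δ.link {w}).chain k) := by
  refine ⟨fun σ hσ => (mem_chain.mp hσ).2, fun ρ hρ => ?_⟩
  rcases (cofaces ((Δ.link {w}).chain k) ρ).eq_empty_or_nonempty with hempty | ⟨σ, hσ⟩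
  · simp [hempty]
  · obtain ⟨hσ, hρσ⟩ := mem_cofaces.mp hσ
    obtain ⟨hwσ, -, hσ⟩ := mem_chain_link_singleton.mp hσ
    rw [hΔ.card_cofaces_chain_link hρ (fun h => hwσ (hρσ h))
      (Δ.down_closed _ hσ _ (insert_subset_insert w hρσ) (insert_nonempty w ρ))]
    exact even_two

theorem IsPseudomanifold.erase_mem_of_adjacentOver (hΔ : Δ.IsPseudomanifold (k + 1))
    {W : Finset (Finset V)} (hW : IsModTwoCycle k W) (hWsub : W ⊆ (Δ.link {w}).chain k)
    (hσ : σ.erase w ∈ W) (hστ : Δ.AdjacentOver (k + 1) {w} σ τ) : τ.erase w ∈ W := by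
  obtain ⟨hτ, hcard, hw⟩ := hστ
  rw [singleton_subset_iff] at hw
  have hridge : ((σ ∩ τ).erase w).card = k := by rw [card_erase_of_mem hw, hcard]; rfl
  have htwo := hΔ.card_cofaces_chain_link hridge (notMem_erase w _) <| by
    rw [insert_erase hw]
    exact Δ.down_closed τ (mem_chain.mp hτ).1 _ inter_subset_right ⟨w, hw⟩
  have hsub : cofaces W ((σ ∩ τ).erase w) ⊆ cofaces ((Δ.link {w}).chain k) ((σ ∩ τ).erase w) :=
    filter_subset_filter _ hWsub
  have hpos : 0 < (cofaces W ((σ ∩ τ).erase w)).card :=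
    card_pos.mpr ⟨_, mem_cofaces.mpr ⟨hσ, erase_subset_erase w inter_subset_left⟩⟩
  obtain ⟨m, hm⟩ := hW.2 _ hridge
  have hτmem : τ.erase w ∈ cofaces W ((σ ∩ τ).erase w) := by
    rw [eq_of_subset_of_card_le hsub (by lia)]
    exact mem_cofaces.mpr ⟨erase_mem_chain_link hτ (mem_inter.mp hw).2,
      erase_subset_erase w inter_subset_right⟩
  exact (mem_cofaces.mp hτmem).1

theorem IsNormal.isMinimalCycle_chain_link (hΔ : Δ.IsNormal (k + 1)) (hw : w ∈ Δ.vertices) :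
    IsMinimalCycle k ((Δ.link {w}).chain k) := by
  have hinsert : ∀ σ ∈ (Δ.link {w}).chain k, w ∉ σ ∧ insert w σ ∈ Δ.chain (k + 1) := by
    intro σ hσ
    obtain ⟨hwσ, hcard, hσ⟩ := mem_chain_link_singleton.mp hσ
    exact ⟨hwσ, mem_chain.mpr ⟨hσ, by rw [card_insert_of_notMem hwσ, hcard]⟩⟩
  refine ⟨⟨hΔ.1.isModTwoCycle_chain_link w, ?_⟩, ?_⟩
  · obtain ⟨τ, hτ, hwτ, hcard⟩ := hΔ.1.1 _ (singleton_mem_faces_iff.mpr hw)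
    exact ⟨_, erase_mem_chain_link (mem_chain.mpr ⟨hτ, hcard⟩) (singleton_subset_iff.mp hwτ)⟩
  · rintro W ⟨hW, σ, hσ⟩ hWsub τ hτ
    obtain ⟨hwσ, hσface⟩ := hinsert σ (hWsub hσ)
    obtain ⟨hwτ, hτface⟩ := hinsert τ hτ
    have hreach : ∀ υ, Relation.ReflTransGen (Δ.AdjacentOver (k + 1) {w}) (insert w σ) υ →
        υ.erase w ∈ W := by
      intro υ hυ
      induction hυ with
      | refl => rwa [erase_insert hwσ]
      | tail _ hadj ih => exact hΔ.1.erase_mem_of_adjacentOver hW hWsub ih hadj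
    have hτW := hreach (insert w τ) <| hΔ.reflTransGen_adjacentOver (singleton_nonempty w) hσface
      (singleton_subset_iff.mpr (mem_insert_self w σ)) hτface
      (singleton_subset_iff.mpr (mem_insert_self w τ))
    rwa [erase_insert hwτ] at hτW

theorem mem_star : σ ∈ (Δ.star w).faces ↔ σ ∈ Δ.faces ∧ insert w σ ∈ Δ.faces :=
  mem_filter

theorem mem_vertices_star (hw : w ∈ Δ.vertices) :
    v ∈ (Δ.star w).vertices ↔ v = w ∨ {w, v} ∈ Δ.faces := by
  rw [← singleton_mem_faces_iff, mem_star]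
  constructor
  · exact fun h => Or.inr h.2
  · rintro (rfl | h)
    · have := singleton_mem_faces_iff.mpr hw
      exact ⟨this, by rwa [insert_eq_of_mem (mem_singleton_self v)]⟩
    · exact ⟨singleton_mem_faces_iff.mpr (subset_vertices h (by simp)), h⟩

theorem subset_vertices_star (hσ : σ ∈ Δ.faces) (hw : w ∈ σ) : σ ⊆ (Δ.star w).vertices :=
  subset_vertices (mem_star.mpr ⟨hσ, by rwa [insert_eq_of_mem hw]⟩)

theorem vertices_star_subset (hΔ : Δ.Pure (k + 1)) :
    (Δ.star w).vertices ⊆ insert w (((Δ.link {w}).chain k).sup id) := by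
  intro v hv
  obtain ⟨-, hface⟩ := mem_star.mp (singleton_mem_faces_iff.mpr hv)
  obtain ⟨τ, hτ, hsub, hcard⟩ := hΔ _ hface
  rcases eq_or_ne v w with rfl | hvw
  · exact mem_insert_self v _
  · refine mem_insert_of_mem (mem_sup.mpr ⟨τ.erase w, ?_, ?_⟩)
    · exact erase_mem_chain_link (mem_chain.mpr ⟨hτ, hcard⟩) (hsub (by simp))
    · exact mem_erase.mpr ⟨hvw, hsub (by simp)⟩

theorem StronglyConnected.connected (hstrong : Δ.StronglyConnected d) (hpure : Δ.Pure d)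
    (hd : 0 < d) : Δ.Connected := by
  intro u hu w hw
  obtain ⟨σ, hσ, huσ, hσcard⟩ := hpure _ (singleton_mem_faces_iff.mpr hu)
  obtain ⟨τ, hτ, hwτ, hτcard⟩ := hpure _ (singleton_mem_faces_iff.mpr hw)
  rw [singleton_subset_iff] at huσ hwτ
  have hpath := hstrong σ hσ τ hτ hσcard hτcard
  clear hw
  induction hpath generalizing w with
  | refl => exact .single (pair_mem_faces hσ huσ hwτ)
  | tail _ hadj ih =>
    obtain ⟨ha, hb, hacard, -, hcard⟩ := hadj
    obtain ⟨e, he⟩ := card_pos.mp (hcard.symm ▸ hd)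
    obtain ⟨hea, heb⟩ := mem_inter.mp he
    exact (ih e ha hea hacard).tail (pair_mem_faces hb heb hwτ)

end Normal

/-! ### Propagating rigidity through stars -/

section Rigidity

variable {V : Type} {K ι : Type*} [DecidableEq V] [Field K] [Fintype ι] {Δ : SComplex V} {d k : ℕ}
  {t u v w : V} {p x : V → ι → K}

theorem IsNormal.eventually_isRigidOn_star [Infinite K] (hι : Fintype.card ι = k + 2) (hk : 2 ≤ k)
    (hΔ : Δ.IsNormal (k + 1)) (hw : w ∈ Δ.vertices) :
    ∀ᶠ p in genericFilter V K ι, IsRigidOn (Δ.star w).faces (Δ.star w).vertices p := by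
  have hwsup : w ∉ ((Δ.link {w}).chain k).sup id := fun h => by
    obtain ⟨σ, hσ, hwσ⟩ := mem_sup.mp h
    exact (mem_chain_link_singleton.mp hσ).1 hwσ
  filter_upwards [(hΔ.isMinimalCycle_chain_link hw).eventually_isRigidOn_cone hι hk hwsup] with p hp
  refine hp.mono (forall_mem_image.mpr fun σ hσ => ⟨insert w σ, ?_, subset_rfl⟩)
    (vertices_star_subset hΔ.1.1)
  have hface := (mem_chain_link_singleton.mp hσ).2.2
  exact mem_star.mpr ⟨hface, by rwa [insert_idem]⟩

/-- Configurations in general position for which every vertex star of `Δ` is rigid. -/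
def HasRigidStars (Δ : SComplex V) (p : V → ι → K) : Prop :=
  InGeneralPosition p Δ.vertices ∧
    ∀ w ∈ Δ.vertices, IsRigidOn (Δ.star w).faces (Δ.star w).vertices p

theorem IsNormal.exists_hasRigidStars [Infinite K] (hι : Fintype.card ι = k + 2) (hk : 2 ≤ k)
    (hΔ : Δ.IsNormal (k + 1)) : ∃ p : V → ι → K, Δ.HasRigidStars p :=
  ((eventually_inGeneralPosition _).and <| (Filter.eventually_all_finset _).mpr fun _ hw =>
    hΔ.eventually_isRigidOn_star hι hk hw).exists

theorem HasRigidStars.eqOn_star_of_pair_mem (hp : Δ.HasRigidStars p) (hι : Fintype.card ι = d + 1)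
    (hΔ : Δ.Pure d) (hx : IsMotion (Δ.star v).faces p x) (huv : {u, v} ∈ Δ.faces)
    {A : Matrix ι ι K} (hA : Set.EqOn x (fun i => A *ᵥ p i) (Δ.star u).vertices) :
    Set.EqOn x (fun i => A *ᵥ p i) (Δ.star v).vertices := by
  obtain ⟨B, -, hB⟩ := hp.2 v (subset_vertices huv (by simp)) x hx
  obtain ⟨τ, hτ, hsub, hcard⟩ := hΔ _ huv
  have hspan := hp.1.span_eq_top (subset_vertices hτ) (hι.trans hcard.symm).le
  obtain rfl : A = B := matrix_eq_of_eqOn hspan fun i hi =>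
    (hA (subset_vertices_star hτ (hsub (by simp)) hi)).symm.trans
      (hB (subset_vertices_star hτ (hsub (by simp)) hi))
  exact hB

theorem HasRigidStars.eqOn_vertices (hp : Δ.HasRigidStars p) (hι : Fintype.card ι = d + 1)
    (hΔ : Δ.Pure d) (hconn : Δ.Connected) (hx : IsMotion Δ.faces p x) (ht : t ∈ Δ.vertices)
    {A : Matrix ι ι K} (hA : Set.EqOn x (fun i => A *ᵥ p i) (Δ.star t).vertices) :
    Set.EqOn x (fun i => A *ᵥ p i) Δ.vertices := by
  intro w hw
  have hstar : Set.EqOn x (fun i => A *ᵥ p i) (Δ.star w).vertices := by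
    induction hconn t ht w hw with
    | refl => exact hA
    | @tail a b _ hab ih =>
      refine hp.eqOn_star_of_pair_mem hι hΔ (hx.mono fun σ hσ => ?_) hab
        (ih (subset_vertices hab (mem_insert_self a _)))
      exact ⟨σ, (mem_star.mp hσ).1, subset_rfl⟩
  exact hstar ((mem_vertices_star hw).mpr (Or.inl rfl))

end Rigidity

section Redundancy

variable {V : Type} {K ι : Type*} [DecidableEq V] [Field K] [Fintype ι] {Δ : SComplex V} {d : ℕ}
  {E : Finset (Finset V)} {t u v : V} {p x : V → ι → K}

theorem isMotion_star_of_insert_notMem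
    (hx : IsMotion (Δ.faces.filter fun σ => ¬{u, v} ⊆ σ) p x) {w : V}
    (hw : insert w {u, v} ∉ Δ.faces) : IsMotion (Δ.star w).faces p x := by
  refine hx.mono fun σ hσ => ⟨σ, mem_filter.mpr ⟨(mem_star.mp hσ).1, fun huv => hw ?_⟩, subset_rfl⟩
  exact Δ.down_closed _ (mem_star.mp hσ).2 _ (insert_subset_insert w huv) (insert_nonempty w _)

theorem HasRigidStars.dotProduct_comm_of_cycle (hp : Δ.HasRigidStars p)
    (hι : Fintype.card ι = d + 1) (hΔ : Δ.Pure d) (hE : IsModTwoCycle 1 E) (hEΔ : E ⊆ Δ.faces)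
    (hchord : ∀ w ∈ E.sup id, w ∉ ({u, v} : Finset V) → insert w {u, v} ∉ Δ.faces)
    (huv : {u, v} ∈ E) (hv : (cofaces E {v}).card = 2)
    (hx : IsMotion (Δ.faces.filter fun σ => ¬{u, v} ⊆ σ) p x) : p u ⬝ᵥ x v = p v ⬝ᵥ x u := by
  obtain ⟨w, w', hw, hvw, hw'u, hpath⟩ := hE.exists_path_avoiding huv hv
  have hstar : ∀ {a b}, {a, b} ∈ E → b ∉ ({u, v} : Finset V) →
      IsMotion (Δ.star b).faces p x := fun hab hb =>
    isMotion_star_of_insert_notMem hx (hchord _ (mem_sup.mpr ⟨_, hab, by simp⟩) hb)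
  have hwΔ : w ∈ Δ.vertices := subset_vertices (hEΔ hvw) (by simp)
  obtain ⟨A, hA, hAw⟩ := hp.2 w hwΔ x (hstar hvw hw)
  have hAw' : Set.EqOn x (fun i => A *ᵥ p i) (Δ.star w').vertices := by
    clear hw'u
    induction hpath with
    | refl => exact hAw
    | tail _ hab ih =>
      exact hp.eqOn_star_of_pair_mem hι hΔ (hstar hab.1 hab.2) (hEΔ hab.1) ih
  rw [hAw (subset_vertices_star (hEΔ hvw) (by simp) (by simp)),
    hAw' (subset_vertices_star (hEΔ hw'u) (by simp) (by simp))]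
  exact dotProduct_mulVec_comm_of_isSymm hA _ _

theorem isMotion_faces_of_dotProduct_comm (hne : u ≠ v)
    (hx : IsMotion (Δ.faces.filter fun σ => ¬{u, v} ⊆ σ) p x)
    (huv : p u ⬝ᵥ x v = p v ⬝ᵥ x u) : IsMotion Δ.faces p x := by
  intro σ hσ i hi j hj
  by_cases hsub : {u, v} ⊆ ({i, j} : Finset V)
  · simp only [insert_subset_iff, singleton_subset_iff, mem_insert, mem_singleton] at hsub
    obtain ⟨rfl | rfl, rfl | rfl⟩ := hsub
    exacts [absurd rfl hne, huv.symm, huv, absurd rfl hne]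
  · exact hx {i, j} (mem_filter.mpr ⟨pair_mem_faces hσ hi hj, hsub⟩) i (by simp) j (by simp)

theorem HasRigidStars.exists_motion_avoiding_edge (hp : Δ.HasRigidStars p)
    (hι : Fintype.card ι = d + 1) (hΔ : Δ.Pure d) (hconn : Δ.Connected) (ht : t ∈ Δ.vertices)
    (hcard : (Δ.chain 1 \ (Δ.star t).chain 1).card ≤
      Fintype.card ι * (Δ.vertices \ (Δ.star t).vertices).card)
    (huv : {u, v} ∈ Δ.chain 1 \ (Δ.star t).chain 1) :
    ∃ x, IsMotion (Δ.faces.filter fun σ => ¬{u, v} ⊆ σ) p x ∧ p u ⬝ᵥ x v ≠ p v ⬝ᵥ x u := by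
  have huvcard := (mem_chain.mp (mem_sdiff.mp huv).1).2
  have hne : u ≠ v := fun h => by simp [h] at huvcard
  set D := Δ.chain 1 \ (Δ.star t).chain 1
  obtain ⟨x, hxD, hxsupp, hxne⟩ := exists_motion_ne_zero (D := D.erase {u, v})
    (fun e he => (mem_chain.mp (mem_sdiff.mp (mem_of_mem_erase he)).1).2)
    ((card_erase_lt_of_mem huv).trans_le hcard) p
  have hzero : ∀ i ∈ (Δ.star t).vertices, x i = 0 := fun i hi =>
    hxsupp i fun h => (mem_sdiff.mp h).2 hi
  have hx : IsMotion (Δ.faces.filter fun σ => ¬{u, v} ⊆ σ) p x := by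
    intro σ hσ i hi j hj
    obtain ⟨hσ, hσuv⟩ := mem_filter.mp hσ
    rcases eq_or_ne i j with rfl | hij
    · rfl
    by_cases hstar : {i, j} ∈ (Δ.star t).chain 1
    · have hsub := subset_vertices (mem_chain.mp hstar).1
      simp [hzero i (hsub (by simp)), hzero j (hsub (by simp))]
    · refine hxD {i, j} (mem_erase.mpr ⟨fun h => hσuv (h ▸ ?_), mem_sdiff.mpr ⟨?_, hstar⟩⟩)
        i (by simp) j (by simp)
      · exact insert_subset hi (singleton_subset_iff.mpr hj)
      · exact mem_chain.mpr ⟨pair_mem_faces hσ hi hj, card_pair hij⟩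
  refine ⟨x, hx, fun hcomm => hxne (funext fun i => ?_)⟩
  by_cases hi : i ∈ Δ.vertices
  · have hvanish := hp.eqOn_vertices hι hΔ hconn (isMotion_faces_of_dotProduct_comm hne hx hcomm) ht
      (A := 0) fun i hi => (hzero i hi).trans (Matrix.zero_mulVec _).symm
    exact (hvanish hi).trans (Matrix.zero_mulVec _)
  · exact hxsupp i fun h => hi (mem_sdiff.mp h).1

end Redundancy

/-! ### Face numbers and `g₂`-minimality -/

section Counting

variable {V : Type} [DecidableEq V] {Δ Ω : SComplex V} {d : ℕ} {t v : V}

theorem chain_star_subset : (Δ.star t).chain d ⊆ Δ.chain d :=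
  filter_subset_filter _ (filter_subset _ _)

theorem card_vertices (Δ : SComplex V) : Δ.vertices.card = Δ.fNum 0 := by
  refine card_nbij (fun v => {v}) (fun v hv => ?_) (fun u _ v _ h => singleton_injective h)
    fun σ hσ => ?_
  · exact mem_filter.mpr ⟨singleton_mem_faces_iff.mpr hv, card_singleton v⟩
  · obtain ⟨hσ, hcard⟩ := mem_filter.mp hσ
    obtain ⟨v, rfl⟩ := card_eq_one.mp hcard
    exact ⟨v, singleton_mem_faces_iff.mp hσ, rfl⟩

theorem vertices_star_eq (ht : t ∈ Δ.vertices) :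
    (Δ.star t).vertices = insert t (Δ.link {t}).vertices := by
  ext v
  rw [mem_vertices_star ht, mem_insert, ← singleton_mem_faces_iff (Δ := Δ.link {t})]
  have hlink : {v} ∈ (Δ.link {t}).faces ↔ t ≠ v ∧ {t, v} ∈ Δ.faces := by
    simpa [mem_chain] using mem_chain_link_singleton (Δ := Δ) (w := t) (σ := {v}) (k := 0)
  rw [hlink]
  tauto

theorem card_vertices_star (ht : t ∈ Δ.vertices) :
    (Δ.star t).vertices.card = (Δ.link {t}).fNum 0 + 1 := by
  rw [vertices_star_eq ht, card_insert_of_notMem, card_vertices]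
  intro h
  obtain ⟨σ, hσ, htσ⟩ := mem_vertices.mp h
  have hdisj := (mem_filter.mp hσ).2.1
  exact notMem_empty t (hdisj ▸ mem_inter.mpr ⟨mem_singleton_self t, htσ⟩)

theorem card_chain_star (Δ : SComplex V) (t : V) (d : ℕ) :
    ((Δ.star t).chain (d + 1)).card = (Δ.link {t}).fNum d + (Δ.link {t}).fNum (d + 1) := by
  rw [← card_filter_add_card_filter_not (t ∈ ·)]
  congr 1
  · refine card_nbij' (erase · t) (insert t) ?_ ?_ ?_ ?_
    · intro σ hσ
      obtain ⟨hσ, ht⟩ := mem_filter.mp hσ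
      exact erase_mem_chain_link (chain_star_subset hσ) ht
    · intro σ hσ
      obtain ⟨ht, hcard, hσ⟩ := mem_chain_link_singleton.mp hσ
      exact mem_filter.mpr ⟨mem_chain.mpr ⟨mem_star.mpr ⟨hσ, by rwa [insert_idem]⟩,
        by rw [card_insert_of_notMem ht, hcard]⟩, mem_insert_self t σ⟩
    · exact fun σ hσ => insert_erase (mem_filter.mp hσ).2
    · exact fun σ hσ => erase_insert (mem_chain_link_singleton.mp hσ).1
  · refine congrArg card (Finset.ext fun σ => ?_)
    change _ ↔ σ ∈ (Δ.link {t}).chain (d + 1)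
    rw [mem_filter, mem_chain, mem_star, mem_chain_link_singleton]
    refine ⟨fun h => ⟨h.2, h.1.2, h.1.1.2⟩, fun ⟨ht, hcard, hσ⟩ => ⟨⟨⟨?_, hσ⟩, hcard⟩, ht⟩⟩
    exact Δ.down_closed _ hσ σ (subset_insert t σ) (card_pos.mp (by lia))

theorem card_chain_sdiff_star (ht : t ∈ Δ.vertices)
    (hmin : Δ.g2 (d + 1) = (Δ.link {t}).g2 d) :
    (Δ.chain 1 \ (Δ.star t).chain 1).card =
      (d + 2) * (Δ.vertices \ (Δ.star t).vertices).card := by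
  have hedges := card_sdiff_add_card_eq_card (chain_star_subset (Δ := Δ) (t := t) (d := 1))
  have hsub : (Δ.star t).vertices ⊆ Δ.vertices := sup_mono (filter_subset _ _)
  have hvertices := card_sdiff_add_card_eq_card hsub
  rw [card_chain_star] at hedges
  rw [card_vertices_star ht, card_vertices] at hvertices
  have hchoose : (d + 1 + 2).choose 2 = (d + 2).choose 2 + (d + 2) := by
    rw [Nat.choose_succ_succ' (d + 2) 1, Nat.choose_one_right, add_comm]
  simp only [g2, hchoose] at hmin
  change _ = Δ.fNum 1 at hedges
  rw [← hedges, ← hvertices] at hmin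
  push_cast at hmin
  zify
  linear_combination hmin

theorem IsNormal.chain_subset_star (hd : 2 ≤ d) (hΔ : Δ.IsNormal (d + 1)) (ht : t ∈ Δ.vertices)
    (hmin : Δ.g2 (d + 1) = (Δ.link {t}).g2 d) {E : Finset (Finset V)} (hE : IsModTwoCycle 1 E)
    (hEΔ : E ⊆ Δ.faces) (hdeg : ∀ v ∈ E.sup id, (cofaces E {v}).card = 2)
    (hchord : ∀ σ ∈ Δ.faces, σ ⊆ E.sup id → σ.card ≤ 2) : E ⊆ (Δ.star t).faces := by
  intro e he
  by_contra hstar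
  have hecard := hE.1 e he
  obtain ⟨u, v, -, rfl⟩ := card_eq_two.mp hecard
  have hι : Fintype.card (Fin (d + 2)) = d + 2 := Fintype.card_fin _
  have hsup : {u, v} ⊆ E.sup id := le_sup (f := id) he
  obtain ⟨p, hp⟩ := hΔ.exists_hasRigidStars (K := ℚ) hι hd
  obtain ⟨x, hx, hne⟩ := hp.exists_motion_avoiding_edge hι hΔ.1.1
    (hΔ.1.2.2.connected hΔ.1.1 d.succ_pos) ht (hι.symm ▸ (card_chain_sdiff_star ht hmin).le)
    (mem_sdiff.mpr ⟨mem_chain.mpr ⟨hEΔ he, hecard⟩, fun h => hstar (mem_chain.mp h).1⟩)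
  refine hne (hp.dotProduct_comm_of_cycle hι hΔ.1.1 hE hEΔ (fun w hw hwuv hface => ?_) he
    (hdeg v (hsup (by simp))) hx)
  have hcard := hchord _ hface (insert_subset hw hsup)
  rw [card_insert_of_notMem hwuv, hecard] at hcard
  lia

end Counting

section Circle

variable {V : Type} [DecidableEq V] {Δ Ω : SComplex V}

theorem cofaces_chain_one (Ω : SComplex V) (v : V) :
    cofaces (Ω.chain 1) {v} = Ω.faces.filter fun e => e.card = 2 ∧ v ∈ e := by
  ext e
  simp [mem_cofaces, mem_chain, and_assoc]

theorem sup_chain_subset_vertices (Ω : SComplex V) (d : ℕ) : (Ω.chain d).sup id ⊆ Ω.vertices :=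
  sup_mono (filter_subset _ _)

theorem isModTwoCycle_chain_one
    (hdeg : ∀ v ∈ Ω.vertices, (Ω.faces.filter fun e => e.card = 2 ∧ v ∈ e).card = 2) :
    IsModTwoCycle 1 (Ω.chain 1) := by
  refine ⟨fun e he => (mem_chain.mp he).2, fun ρ hρ => ?_⟩
  obtain ⟨v, rfl⟩ := card_eq_one.mp hρ
  by_cases hv : v ∈ Ω.vertices
  · rw [cofaces_chain_one, hdeg v hv]
    exact even_two
  · rw [cofaces_chain_one, filter_false_of_mem fun e he h => hv (subset_vertices he h.2)]
    exact Even.zero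

theorem exists_edge_of_mem_faces
    (hdeg : ∀ v ∈ Ω.vertices, (Ω.faces.filter fun e => e.card = 2 ∧ v ∈ e).card = 2)
    {σ : Finset V} (hσ : σ ∈ Ω.faces) (hcard : σ.card ≤ 2) : ∃ e ∈ Ω.chain 1, σ ⊆ e := by
  obtain ⟨v, hv⟩ := Ω.nonempty_of_mem σ hσ
  have hpos := card_pos.mpr ⟨v, hv⟩
  rcases (by lia : σ.card = 1 ∨ σ.card = 2) with hone | htwo
  · obtain ⟨w, rfl⟩ := card_eq_one.mp hone
    obtain ⟨e, he⟩ := card_pos.mp ((hdeg w (singleton_mem_faces_iff.mp hσ)).symm ▸ two_pos)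
    obtain ⟨he, hecard, hwe⟩ := mem_filter.mp he
    exact ⟨e, mem_chain.mpr ⟨he, hecard⟩, singleton_subset_iff.mpr hwe⟩
  · exact ⟨σ, mem_chain.mpr ⟨hσ, htwo⟩, subset_rfl⟩

end Circle

end SComplex

open SComplex in
theorem induced_circle_subset_star_general {V : Type} [DecidableEq V] {d : ℕ} (hd : 2 ≤ d)
    (Δ Ω : SComplex V) (t : V) (hΔ : Δ.IsNormal (d + 1)) (ht : t ∈ Δ.vertices)
    (hmin : Δ.g2 (d + 1) = (Δ.link {t}).g2 d)
    (hind : Ω.faces = Δ.faces.filter fun σ => σ ⊆ Ω.vertices)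
    (hdim : ∀ σ ∈ Ω.faces, σ.card ≤ 2)
    (hdeg : ∀ v ∈ Ω.vertices, (Ω.faces.filter fun e => e.card = 2 ∧ v ∈ e).card = 2) :
    Ω.faces ⊆ (Δ.star t).faces ∧
      ∀ v ∈ Ω.vertices, v = t ∨ ({t, v} : Finset V) ∈ Δ.faces := by
  have hsup := Ω.sup_chain_subset_vertices 1
  have hedges : Ω.chain 1 ⊆ (Δ.star t).faces :=
    hΔ.chain_subset_star hd ht hmin (isModTwoCycle_chain_one hdeg)
      (fun e he => (mem_filter.mp (hind ▸ (mem_chain.mp he).1)).1)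
      (fun v hv => by rw [cofaces_chain_one, hdeg v (hsup hv)])
      (fun σ hσ hσsup => hdim σ (hind ▸ mem_filter.mpr ⟨hσ, hσsup.trans hsup⟩))
  have hfaces : Ω.faces ⊆ (Δ.star t).faces := fun σ hσ => by
    obtain ⟨e, he, hσe⟩ := exists_edge_of_mem_faces hdeg hσ (hdim σ hσ)
    exact (Δ.star t).down_closed e (hedges he) σ hσe (Ω.nonempty_of_mem σ hσ)
  exact ⟨hfaces, fun v hv => (mem_vertices_star ht).mp <|
    singleton_mem_faces_iff.mp (hfaces (singleton_mem_faces_iff.mpr hv))⟩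

/-- if `Δ` is a 3-dimensional normal pseudomanifold which is
`g₂`-minimal with respect to a vertex `t`, then any induced subcomplex `Ω` of `Δ`
which is a circle is contained in `st(t, Δ)`; in particular every vertex of `Ω`
is `t` or a neighbour of `t`. -/
theorem induced_circle_subset_star {V : Type} [DecidableEq V]
    (Δ Ω : SComplex V) (t : V)
    (hΔ : Δ.IsNormal 3) (ht : t ∈ Δ.vertices)
    (hmin : Δ.g2 3 = (Δ.link {t}).g2 2)
    (hind : Ω.faces = Δ.faces.filter fun σ => σ ⊆ Ω.vertices)
    (hcirc : Ω.IsCircle) :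
    Ω.faces ⊆ (Δ.star t).faces ∧
      ∀ v ∈ Ω.vertices, v = t ∨ ({t, v} : Finset V) ∈ Δ.faces := by
  exact induced_circle_subset_star_general le_rfl Δ Ω t hΔ ht hmin hind hcirc.1 hcirc.2.2.2
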